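/- arXiv:1907.10184 — 2 statements merged into one kernel-verified Lean document; each statement's English description precedes it below -/
import Mathlib

section
/- Let S ⊆ {−1,0,1}^d be a nontrivial reflectable stepset and let e(n) denote the number of orthant-confined walks of length n that end at the origin (excursions). Then there exists a constant γ > 0 such that e(2n)·|S|^{−2n}·(2n)^{3d/2} → γ as n → ∞, and there exists C > 0 such that e(n) ≤ C·|S|^n·n^{−3d/2} for all n ≥ 1; that is, the excursions grow as |S|^n·n^{−3d/2}, where |S| = S(1,…,1) is the number of steps. -/
/-!
The proof is a discrete spectral version of the reflection principle followed by Laplace's method.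

For fixed `t`, the function `a ↦ ∏ j, sin ((a j + 1) t j)` is an eigenfunction of the step operator
with eigenvalue `charSum S t = ∑ σ ∈ S, ∏ j, cos (σ j t j)` (`sum_prod_sin`), and it vanishes on the
hyperplanes `a j = -1` just outside the orthant. Hence the number of confined walks of length `n`
from `a` to the origin is the integral over a period, with density `π⁻¹` in each coordinate, of
`charSum S t ^ n * ∏ j, sin ((a j + 1) t j) * sin (t j)`: both sides obey the same recursion in `n`,
and for `n = 0` this is the orthogonality of sines (`count_eq_integral`).

The extrema of `charSum S` of absolute value `|S|` lie at points of `{0, π}^d`. The period is cut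
into the translates of `[-π/2, π/2]^d` centred at these `2^d` points, labelled by
`ε : Fin d → Fin 2`. On each of them the substitution `t = u / √m` turns the normalised excursion
number into `∫ scaled S m ε` (`excursions_eq_integral`). The integrands have a common integrable
bound `∏ j, π⁻¹ (u j)² exp (-c (u j)²)` (`abs_scaled_le`), which gives the upper estimate for all
`n`. Along even `m` they converge pointwise, to a Gaussian times `∏ j, π⁻¹ (u j)²` if the centre is
an extremum and to `0` otherwise (`tendsto_scaled`); dominated convergence yields the limit, and the
translate `ε = 0` makes it positive.
-/

open scoped BigOperators Classical

def IsStepset (d : ℕ) (S : Finset (Fin d → ℤ)) : Prop :=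
  ∀ σ ∈ S, ∀ j, σ j = -1 ∨ σ j = 0 ∨ σ j = 1

def Reflectable (d : ℕ) (S : Finset (Fin d → ℤ)) : Prop :=
  ∀ σ ∈ S, ∀ j, Function.update σ j (-(σ j)) ∈ S

def NontrivialStepset (d : ℕ) (S : Finset (Fin d → ℤ)) : Prop :=
  ∀ j, ∃ σ ∈ S, σ j ≠ 0

def Confined (d : ℕ) {n : ℕ} (w : Fin n → (Fin d → ℤ)) : Prop :=
  ∀ k : ℕ, k ≤ n → ∀ j,
    0 ≤ ∑ i ∈ Finset.univ.filter (fun i : Fin n => (i : ℕ) < k), w i j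

/-- The number of orthant-confined excursions of length `n`. -/
noncomputable def excursions (d : ℕ) (S : Finset (Fin d → ℤ)) (n : ℕ) : ℕ :=
  (Finset.univ.filter (fun w : Fin n → {σ // σ ∈ S} =>
      Confined d (fun i => (w i).1) ∧ ∀ j, ∑ i, (w i).1 j = 0)).card

namespace OrthantWalk

/-! ### The eigenfunction identity -/

/-- The step polynomial `S(x)` at `x = e^{it}`: since `S` is closed under sign changes,
`∑ σ ∈ S, e^{i σ·t}` equals this real sum of products of cosines. -/
noncomputable def charSum {d : ℕ} (S : Finset (Fin d → ℤ)) (t : Fin d → ℝ) : ℝ :=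
  ∑ σ ∈ S, ∏ j, Real.cos (σ j * t j)

/-- The reflection principle in spectral form: for fixed `t`, the function
`a ↦ ∏ j, sin ((a j + 1) * t j)` is an eigenfunction of the step operator `f ↦ ∑ σ ∈ S, f (· + σ)`
with eigenvalue `charSum S t`. Expanding each sine by the addition formula, every term containing
a factor `sin (σ j * t j)` cancels against the step with the `j`-th coordinate negated. The phase
`(a j + 1) * t j` enters as an arbitrary real `b j`. -/
theorem sum_prod_sin {d : ℕ} {S : Finset (Fin d → ℤ)}
    (hrefl : ∀ σ ∈ S, ∀ j, Function.update σ j (-(σ j)) ∈ S) (b t : Fin d → ℝ) :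
    ∑ σ ∈ S, ∏ j, Real.sin (b j + σ j * t j) = charSum S t * ∏ j, Real.sin (b j) := by
  simp only [Real.sin_add, Finset.prod_add]
  rw [Finset.sum_comm, Finset.sum_eq_single Finset.univ]
  · simp only [charSum, Finset.sum_mul, Finset.prod_mul_distrib, sdiff_self, Finset.bot_eq_empty,
      Finset.prod_empty, mul_one]
    exact Finset.sum_congr rfl fun σ _ => mul_comm _ _
  · intro J _ hJ
    obtain ⟨j, hj⟩ : ∃ j, j ∉ J := by
      by_contra! h
      exact hJ (Finset.eq_univ_iff_forall.2 h)
    refine Finset.sum_involution (fun σ _ => Function.update σ j (-(σ j))) ?_ ?_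
      (fun σ hσ => hrefl σ hσ j) ?_
    · intro σ _
      have hjm : j ∈ Finset.univ \ J := by simp [hj]
      have h1 : ∏ i ∈ J, Real.sin (b i) * Real.cos ((Function.update σ j (-(σ j)) i : ℤ) * t i)
          = ∏ i ∈ J, Real.sin (b i) * Real.cos (σ i * t i) := by
        refine Finset.prod_congr rfl fun i hi => ?_
        rw [Function.update_of_ne (by rintro rfl; exact hj hi)]
      have h2 : ∏ i ∈ Finset.univ \ J,
            Real.cos (b i) * Real.sin ((Function.update σ j (-(σ j)) i : ℤ) * t i)
          = - ∏ i ∈ Finset.univ \ J, Real.cos (b i) * Real.sin (σ i * t i) := by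
        rw [← Finset.mul_prod_erase _ _ hjm, ← Finset.mul_prod_erase _ _ hjm]
        have : ∏ i ∈ (Finset.univ \ J).erase j,
              Real.cos (b i) * Real.sin ((Function.update σ j (-(σ j)) i : ℤ) * t i)
            = ∏ i ∈ (Finset.univ \ J).erase j, Real.cos (b i) * Real.sin (σ i * t i) := by
          refine Finset.prod_congr rfl fun i hi => ?_
          rw [Function.update_of_ne (Finset.ne_of_mem_erase hi)]
        rw [this]
        simp
      rw [h1, h2]
      ring
    · intro σ _ hne heq
      apply hne
      have h0 : σ j = 0 := by
        have := congrFun heq j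
        simp at this
        omega
      have : ∏ i ∈ Finset.univ \ J, Real.cos (b i) * Real.sin (σ i * t i) = 0 :=
        Finset.prod_eq_zero (i := j) (by simp [hj]) (by simp [h0])
      rw [this, mul_zero]
    · intro σ _
      simp
  · simp

/-! ### Confined walks from an arbitrary starting point -/

/-- The walk `w` started at `a` stays in the orthant (the case `k = 0` says that `a` itself lies in
it) and ends at the origin. -/
def Good {d n : ℕ} (a : Fin d → ℤ) (w : Fin n → Fin d → ℤ) : Prop :=
  (∀ k : ℕ, k ≤ n → ∀ j,
    0 ≤ a j + ∑ i ∈ Finset.univ.filter (fun i : Fin n => (i : ℕ) < k), w i j) ∧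
  ∀ j, a j + ∑ i, w i j = 0

/-- The number of walks with `n` steps in `S` from `a` to the origin that stay in the orthant. -/
noncomputable def count {d : ℕ} (S : Finset (Fin d → ℤ)) (n : ℕ) (a : Fin d → ℤ) : ℕ :=
  (Finset.univ.filter (fun w : Fin n → {σ // σ ∈ S} => Good a (fun i => (w i).1))).card

theorem count_zero {d : ℕ} (S : Finset (Fin d → ℤ)) (a : Fin d → ℤ) :
    count S 0 a = if a = 0 then 1 else 0 := by
  have : ∀ w : Fin 0 → {σ // σ ∈ S}, Good a (fun i => (w i).1) ↔ a = 0 := by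
    intro w
    simp only [Good, Finset.univ_eq_empty, Finset.filter_empty, Finset.sum_empty, add_zero]
    exact ⟨fun h => funext h.2, by rintro rfl; simp⟩
  unfold count
  simp only [this]
  split_ifs with h <;> simp [h]

theorem count_eq_zero {d : ℕ} (S : Finset (Fin d → ℤ)) (n : ℕ) (a : Fin d → ℤ) (j : Fin d)
    (hj : a j < 0) : count S n a = 0 := by
  rw [count, Finset.card_eq_zero, Finset.filter_eq_empty_iff]
  intro w _ h
  have := h.1 0 (Nat.zero_le _) j
  simp at this
  omega

theorem good_cons {d n : ℕ} (a σ : Fin d → ℤ) (ha : ∀ j, 0 ≤ a j) (w : Fin n → Fin d → ℤ) :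
    Good a (Fin.cons σ w : Fin (n + 1) → Fin d → ℤ) ↔ Good (a + σ) w := by
  have key : ∀ k j, a j + ∑ i ∈ Finset.univ.filter (fun i : Fin (n + 1) => (i : ℕ) < k + 1),
      (Fin.cons σ w : Fin (n + 1) → Fin d → ℤ) i j
      = (a + σ) j + ∑ i ∈ Finset.univ.filter (fun i : Fin n => (i : ℕ) < k), w i j := by
    intro k j
    simp only [Finset.sum_filter, Fin.sum_univ_succ]
    simp [add_assoc]
  constructor
  · rintro ⟨h1, h2⟩
    refine ⟨fun k hk j => ?_, fun j => ?_⟩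
    · rw [← key]
      exact h1 (k + 1) (by omega) j
    · rw [← h2 j, Fin.sum_univ_succ]
      simp [add_assoc]
  · rintro ⟨h1, h2⟩
    refine ⟨fun k hk j => ?_, fun j => ?_⟩
    · cases k with
      | zero => simpa using ha j
      | succ k =>
        rw [key]
        exact h1 k (by omega) j
    · rw [← h2 j, Fin.sum_univ_succ]
      simp [add_assoc]

/-- Recursion on the first step. -/
theorem count_succ {d : ℕ} (S : Finset (Fin d → ℤ)) (n : ℕ) (a : Fin d → ℤ)
    (ha : ∀ j, 0 ≤ a j) : count S (n + 1) a = ∑ σ ∈ S, count S n (a + σ) := by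
  simp only [count, Finset.card_filter]
  rw [← (Fin.consEquiv (fun _ => {σ // σ ∈ S})).sum_comp, Fintype.sum_prod_type,
    ← Finset.sum_coe_sort S]
  refine Finset.sum_congr rfl fun σ _ => Finset.sum_congr rfl fun w _ => ?_
  rw [← good_cons a σ.1 ha]
  congr 2
  funext i
  refine Fin.cases ?_ (fun i => ?_) i <;> simp [Fin.consEquiv]

theorem prod_cos_bounds {d : ℕ} (σ : Fin d → ℤ) (hσ : ∀ j, σ j = -1 ∨ σ j = 0 ∨ σ j = 1)
    (t : Fin d → ℝ) (ht : ∀ j, |t j| ≤ Real.pi / 2) (j : Fin d) :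
    0 ≤ ∏ j, Real.cos (σ j * t j) ∧
    ∏ j, Real.cos (σ j * t j) ≤ 1 - 2 / Real.pi ^ 2 * (σ j * t j) ^ 2 := by
  have h0 : ∀ j, |σ j * t j| ≤ Real.pi / 2 := by
    intro j
    rcases hσ j with h | h | h <;> simp [h, ht j]
    positivity
  have h1 : ∀ j, 0 ≤ Real.cos (σ j * t j) := fun j =>
    Real.cos_nonneg_of_neg_pi_div_two_le_of_le (abs_le.1 (h0 j)).1 (abs_le.1 (h0 j)).2
  refine ⟨Finset.prod_nonneg fun j _ => h1 j, ?_⟩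
  rw [← Finset.mul_prod_erase _ _ (Finset.mem_univ j)]
  refine (mul_le_of_le_one_right (h1 j)
    (Finset.prod_le_one (fun i _ => h1 i) fun i _ => Real.cos_le_one _)).trans ?_
  exact Real.cos_le_one_sub_mul_cos_sq ((h0 j).trans (by linarith [Real.pi_pos]))

/-! ### The integral representation -/

/-- The density `1/π` on `[-π/2, π/2]`, extended by zero. -/
noncomputable def wt (x : ℝ) : ℝ :=
  Set.indicator (Set.Icc (-(Real.pi / 2)) (Real.pi / 2)) (fun _ => 1 / Real.pi) x

theorem wt_nonneg (x : ℝ) : 0 ≤ wt x :=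
  Set.indicator_nonneg (fun _ _ => by positivity) x

theorem wt_le (x : ℝ) : wt x ≤ 1 / Real.pi :=
  Set.indicator_le_self' (fun _ _ => by positivity) x

theorem measurable_wt : Measurable wt := measurable_const.indicator measurableSet_Icc

theorem integrable_wt : MeasureTheory.Integrable wt :=
  (MeasureTheory.integrable_indicator_iff measurableSet_Icc).2
    (MeasureTheory.integrableOn_const (by simp))

/-- Translation by `π` in the coordinates with `ε j = 1`. These translates of the box
`[-π/2, π/2]^d` tile a full period, each with a possible maximum of `|charSum S|` at its centre. -/
noncomputable def halfShift {d : ℕ} (ε : Fin d → Fin 2) (t : Fin d → ℝ) : Fin d → ℝ :=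
  fun j => t j + ((ε j : ℕ) : ℝ) * Real.pi

/-- The integrand, over the translate of the box labelled by `ε`, of the integral formula for
`count S n a`. -/
noncomputable def kernel {d : ℕ} (S : Finset (Fin d → ℤ)) (n : ℕ) (a : Fin d → ℤ)
    (ε : Fin d → Fin 2) (t : Fin d → ℝ) : ℝ :=
  charSum S (halfShift ε t) ^ n *
    ∏ j, (wt (t j) * (Real.sin ((a j + 1) * halfShift ε t j) * Real.sin (halfShift ε t j)))

theorem continuous_halfShift {d : ℕ} (ε : Fin d → Fin 2) : Continuous (halfShift ε) := by
  unfold halfShift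
  fun_prop

theorem continuous_charSum {d : ℕ} (S : Finset (Fin d → ℤ)) : Continuous (charSum S) := by
  unfold charSum
  fun_prop

theorem abs_charSum_le {d : ℕ} (S : Finset (Fin d → ℤ)) (t : Fin d → ℝ) :
    |charSum S t| ≤ S.card := by
  refine (Finset.abs_sum_le_sum_abs _ _).trans ?_
  refine (Finset.sum_le_card_nsmul _ _ 1 fun σ _ => ?_).trans (by simp)
  rw [Finset.abs_prod]
  exact Finset.prod_le_one (fun _ _ => abs_nonneg _) fun _ _ => Real.abs_cos_le_one _

theorem measurable_kernel {d : ℕ} (S : Finset (Fin d → ℤ)) (n : ℕ) (a : Fin d → ℤ)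
    (ε : Fin d → Fin 2) : Measurable (kernel S n a ε) := by
  unfold kernel
  have h1 := ((continuous_charSum S).comp (continuous_halfShift ε)).measurable
  have h2 : ∀ j, Measurable fun t => halfShift ε t j := fun j =>
    ((continuous_apply j).comp (continuous_halfShift ε)).measurable
  have h3 := measurable_wt
  refine (h1.pow_const n).mul (Finset.measurable_prod _ fun j _ => ?_)
  exact (h3.comp (measurable_pi_apply j)).mul
    ((Real.measurable_sin.comp ((h2 j).const_mul _)).mul (Real.measurable_sin.comp (h2 j)))

theorem integrable_kernel {d : ℕ} (S : Finset (Fin d → ℤ)) (n : ℕ) (a : Fin d → ℤ)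
    (ε : Fin d → Fin 2) : MeasureTheory.Integrable (kernel S n a ε) := by
  have hw : MeasureTheory.Integrable (fun t : Fin d → ℝ => ∏ j, wt (t j)) :=
    MeasureTheory.Integrable.fintype_prod (f := fun _ => wt) fun _ => integrable_wt
  refine (hw.const_mul ((S.card : ℝ) ^ n)).mono' (measurable_kernel S n a ε).aestronglyMeasurable
    (Filter.Eventually.of_forall fun t => ?_)
  rw [kernel, norm_mul, norm_pow, norm_prod]
  refine mul_le_mul (pow_le_pow_left₀ (norm_nonneg _) (abs_charSum_le S _) n) ?_
    (Finset.prod_nonneg fun _ _ => norm_nonneg _) (by positivity)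
  refine Finset.prod_le_prod (fun _ _ => norm_nonneg _) fun j _ => ?_
  rw [norm_mul, Real.norm_of_nonneg (wt_nonneg _), norm_mul]
  exact mul_le_of_le_one_right (wt_nonneg _)
    (mul_le_one₀ (Real.abs_sin_le_one _) (norm_nonneg _) (Real.abs_sin_le_one _))

theorem integral_wt_mul (f : ℝ → ℝ) (hf : Continuous f) :
    ∑ e : Fin 2, ∫ x, wt x * f (x + ((e : ℕ) : ℝ) * Real.pi)
      = 1 / Real.pi * ∫ x in (-(Real.pi / 2))..(3 * Real.pi / 2), f x := by
  have h : ∀ e : Fin 2, ∫ x, wt x * f (x + ((e : ℕ) : ℝ) * Real.pi)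
      = 1 / Real.pi * ∫ x in (-(Real.pi / 2) + ((e : ℕ) : ℝ) * Real.pi)..
          (Real.pi / 2 + ((e : ℕ) : ℝ) * Real.pi), f x := by
    intro e
    rw [← intervalIntegral.integral_comp_add_right, intervalIntegral.integral_of_le
      (by linarith [Real.pi_pos]), ← MeasureTheory.integral_Icc_eq_integral_Ioc,
      ← MeasureTheory.integral_indicator measurableSet_Icc, ← MeasureTheory.integral_const_mul]
    congr 1
    funext x
    by_cases hx : x ∈ Set.Icc (-(Real.pi / 2)) (Real.pi / 2) <;> simp [wt, hx]
  rw [Fin.sum_univ_two, h, h, ← mul_add]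
  congr 1
  have e1 : Real.pi / 2 + (((0 : Fin 2) : ℕ) : ℝ) * Real.pi = Real.pi / 2 := by simp
  have e2 : -(Real.pi / 2) + (((1 : Fin 2) : ℕ) : ℝ) * Real.pi = Real.pi / 2 := by simp; ring
  have e3 : Real.pi / 2 + (((1 : Fin 2) : ℕ) : ℝ) * Real.pi = 3 * Real.pi / 2 := by simp; ring
  have e4 : -(Real.pi / 2) + (((0 : Fin 2) : ℕ) : ℝ) * Real.pi = -(Real.pi / 2) := by simp
  rw [e1, e2, e3, e4]
  exact intervalIntegral.integral_add_adjacent_intervals (hf.intervalIntegrable _ _)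
    (hf.intervalIntegrable _ _)

theorem integral_cos_int (k : ℤ) (hk : k ≠ 0) :
    ∫ x in (-(Real.pi / 2))..(3 * Real.pi / 2), Real.cos (k * x) = 0 := by
  have hk' : (k : ℝ) ≠ 0 := by exact_mod_cast hk
  rw [intervalIntegral.integral_comp_mul_left _ hk', integral_cos]
  have : (k : ℝ) * (3 * Real.pi / 2) = k * (-(Real.pi / 2)) + k * (2 * Real.pi) := by ring
  rw [this, Real.sin_add_int_mul_two_pi]
  simp

/-- Orthogonality of `sin ((a + 1) x)` and `sin x` over a full period. For `a = -1` the first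
factor vanishes, so that starting points just outside the orthant are included. -/
theorem integral_sin_mul_sin (a : ℤ) (ha : -1 ≤ a) :
    ∑ e : Fin 2, ∫ x, wt x * (Real.sin ((a + 1) * (x + ((e : ℕ) : ℝ) * Real.pi))
        * Real.sin (x + ((e : ℕ) : ℝ) * Real.pi)) = if a = 0 then 1 else 0 := by
  rw [integral_wt_mul (fun x => Real.sin ((a + 1) * x) * Real.sin x) (by fun_prop)]
  have h : ∀ x : ℝ, Real.sin ((a + 1) * x) * Real.sin x
      = (Real.cos (a * x) - Real.cos ((a + 2 : ℤ) * x)) / 2 := by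
    intro x
    have h1 : (a : ℝ) * x = (a + 1) * x - x := by ring
    have h2 : ((a + 2 : ℤ) : ℝ) * x = (a + 1) * x + x := by push_cast; ring
    rw [h1, h2, Real.cos_sub, Real.cos_add]
    ring
  simp only [h]
  rw [intervalIntegral.integral_div, intervalIntegral.integral_sub
    (Continuous.intervalIntegrable (by fun_prop) _ _)
    (Continuous.intervalIntegrable (by fun_prop) _ _), integral_cos_int (a + 2) (by omega)]
  split_ifs with h0
  · subst h0
    simp
    field_simp
    ring
  · rw [integral_cos_int a h0]
    simp

/-- Both sides satisfy the same recursion. A step from the orthant reaches coordinates at least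
`-1`, and on the hyperplanes `a j = -1` both sides vanish. -/
theorem count_eq_integral {d : ℕ} {S : Finset (Fin d → ℤ)}
    (hstep : ∀ σ ∈ S, ∀ j, σ j = -1 ∨ σ j = 0 ∨ σ j = 1)
    (hrefl : ∀ σ ∈ S, ∀ j, Function.update σ j (-(σ j)) ∈ S) (n : ℕ) :
    ∀ a : Fin d → ℤ, (∀ j, -1 ≤ a j) →
      (count S n a : ℝ) = ∑ ε : Fin d → Fin 2, ∫ t, kernel S n a ε t := by
  induction n with
  | zero =>
    intro a ha
    have h : ∀ ε : Fin d → Fin 2, ∫ t, kernel S 0 a ε t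
        = ∏ j, ∫ x, wt x * (Real.sin ((a j + 1) * (x + ((ε j : ℕ) : ℝ) * Real.pi))
        * Real.sin (x + ((ε j : ℕ) : ℝ) * Real.pi)) := by
      intro ε
      rw [← MeasureTheory.integral_fintype_prod_volume_eq_prod]
      simp [kernel, halfShift]
    simp only [h]
    rw [← Fintype.prod_sum (fun j (e : Fin 2) =>
      ∫ x, wt x * (Real.sin ((a j + 1) * (x + ((e : ℕ) : ℝ) * Real.pi))
        * Real.sin (x + ((e : ℕ) : ℝ) * Real.pi)))]
    rw [Finset.prod_congr rfl fun j _ => integral_sin_mul_sin (a j) (ha j), count_zero]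
    split_ifs with h0
    · simp [h0]
    · obtain ⟨j, hj⟩ := Function.ne_iff.1 h0
      rw [Finset.prod_eq_zero (Finset.mem_univ j) (if_neg hj)]
      simp
  | succ n ih =>
    intro a ha
    by_cases hpos : ∀ j, 0 ≤ a j
    · rw [count_succ S n a hpos, Nat.cast_sum, Finset.sum_congr rfl fun σ hσ => ih (a + σ) fun j => by
        have := hpos j
        rcases hstep σ hσ j with h | h | h <;> simp [h] <;> omega]
      rw [Finset.sum_comm]
      refine Finset.sum_congr rfl fun ε _ => ?_
      rw [← MeasureTheory.integral_finsetSum _ fun σ _ => integrable_kernel S n (a + σ) ε]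
      congr 1
      funext t
      simp only [kernel, Finset.prod_mul_distrib]
      rw [← Finset.mul_sum, ← Finset.mul_sum, ← Finset.sum_mul, pow_succ, mul_assoc]
      congr 1
      have := sum_prod_sin hrefl (fun j => (a j + 1) * halfShift ε t j) (halfShift ε t)
      have h2 : ∀ σ : Fin d → ℤ, ∀ j, (((a + σ) j : ℤ) + 1 : ℝ) * halfShift ε t j
          = (a j + 1) * halfShift ε t j + σ j * halfShift ε t j := by
        intro σ j
        simp
        ring
      simp only [h2]
      rw [this]
      ring
    · push Not at hpos
      obtain ⟨j, hj⟩ := hpos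
      rw [count_eq_zero S _ a j hj]
      have haj : a j = -1 := by have := ha j; omega
      have : ∀ ε t, kernel S (n + 1) a ε t = 0 := by
        intro ε t
        rw [kernel, Finset.prod_eq_zero (Finset.mem_univ j), mul_zero]
        simp [haj]
      simp [this]

/-! ### Rescaling -/

/-- The integrand for excursions of length `m` after the substitution `t = u / √m`, normalised by
`|S|^m` and `m^(3d/2)`. -/
noncomputable def scaled {d : ℕ} (S : Finset (Fin d → ℤ)) (m : ℕ) (ε : Fin d → Fin 2)
    (u : Fin d → ℝ) : ℝ :=
  (charSum S (halfShift ε fun j => u j / √m) / S.card) ^ m *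
    ∏ j, (wt (u j / √m) * (√m * Real.sin (u j / √m)) ^ 2)

theorem kernel_zero {d : ℕ} (S : Finset (Fin d → ℤ)) (n : ℕ) (ε : Fin d → Fin 2)
    (t : Fin d → ℝ) : kernel S n 0 ε t =
      charSum S (halfShift ε t) ^ n * ∏ j, (wt (t j) * Real.sin (t j) ^ 2) := by
  have h : ∀ j, Real.sin (halfShift ε t j) ^ 2 = Real.sin (t j) ^ 2 := by
    intro j
    rw [halfShift, Real.sin_add_nat_mul_pi, mul_pow, ← pow_mul, mul_comm _ 2, pow_mul]
    simp
  simp only [kernel, Pi.zero_apply, Int.cast_zero, zero_add, one_mul, ← sq, h]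

theorem scaled_eq {d : ℕ} (S : Finset (Fin d → ℤ)) (m : ℕ) (ε : Fin d → Fin 2)
    (u : Fin d → ℝ) : scaled S m ε u =
      ((S.card : ℝ) ^ m)⁻¹ * √m ^ (2 * d) * kernel S m 0 ε ((√m)⁻¹ • u) := by
  have h : ((√m)⁻¹ • u) = fun j => u j / √m := by
    funext j
    simp [div_eq_inv_mul]
  rw [kernel_zero, h, scaled, div_pow]
  simp only [mul_pow, Finset.prod_mul_distrib, Finset.prod_const, Finset.card_univ,
    Fintype.card_fin, pow_mul]
  ring

theorem measurable_scaled {d : ℕ} (S : Finset (Fin d → ℤ)) (m : ℕ) (ε : Fin d → Fin 2) :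
    Measurable (scaled S m ε) := by
  rw [funext (scaled_eq S m ε)]
  exact ((measurable_kernel S m 0 ε).comp (measurable_const_smul _)).const_mul _

theorem excursions_eq_count (d : ℕ) (S : Finset (Fin d → ℤ)) (n : ℕ) :
    excursions d S n = count S n 0 := by
  simp [excursions, count, Good, Confined]

/-- Of the factor `m^(3d/2) = (√m)^(3d)`, the power `(√m)^d` is absorbed by the change of
variables and `(√m)^(2d)` by the squared sines. -/
theorem excursions_eq_integral {d : ℕ} {S : Finset (Fin d → ℤ)}
    (hstep : ∀ σ ∈ S, ∀ j, σ j = -1 ∨ σ j = 0 ∨ σ j = 1)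
    (hrefl : ∀ σ ∈ S, ∀ j, Function.update σ j (-(σ j)) ∈ S) (m : ℕ) :
    (excursions d S m : ℝ) * ((S.card : ℝ) ^ m)⁻¹ * (m : ℝ) ^ (3 * (d : ℝ) / 2) =
      ∑ ε : Fin d → Fin 2, ∫ u, scaled S m ε u := by
  have hm : (m : ℝ) ^ (3 * (d : ℝ) / 2) = √m ^ (2 * d) * √m ^ d := by
    rw [← pow_add, Real.sqrt_eq_rpow, ← Real.rpow_natCast, ← Real.rpow_mul (Nat.cast_nonneg m)]
    congr 1
    push_cast
    ring
  rw [excursions_eq_count, count_eq_integral hstep hrefl m 0 (by simp), hm, Finset.sum_mul,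
    Finset.sum_mul]
  refine Finset.sum_congr rfl fun ε _ => ?_
  simp only [scaled_eq]
  rw [MeasureTheory.integral_const_mul, MeasureTheory.Measure.integral_comp_inv_smul]
  simp only [Module.finrank_fintype_fun_eq_card, Fintype.card_fin, smul_eq_mul]
  rw [abs_of_nonneg (by positivity)]
  ring

/-! ### Gaussian domination -/

/-- The sign `±1` that the term of `charSum S` belonging to `σ` acquires under the translation
`halfShift ε`. -/
noncomputable def signOf {d : ℕ} (ε : Fin d → Fin 2) (σ : Fin d → ℤ) : ℝ :=
  ∏ j, Real.cos (σ j * (((ε j : ℕ) : ℝ) * Real.pi))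

theorem signOf_zero {d : ℕ} (σ : Fin d → ℤ) : signOf 0 σ = 1 := by simp [signOf]

theorem signOf_eq {d : ℕ} (ε : Fin d → Fin 2) (σ : Fin d → ℤ) :
    signOf ε σ = 1 ∨ signOf ε σ = -1 := by
  rw [← sq_eq_one_iff, signOf, ← Finset.prod_pow]
  refine Finset.prod_eq_one fun j _ => ?_
  rw [Real.cos_sq', ← mul_assoc]
  have := Real.sin_int_mul_pi (σ j * (ε j : ℕ))
  push_cast at this
  rw [this]
  simp

theorem charSum_halfShift {d : ℕ} (S : Finset (Fin d → ℤ)) (ε : Fin d → Fin 2)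
    (t : Fin d → ℝ) :
    charSum S (halfShift ε t) = ∑ σ ∈ S, signOf ε σ * ∏ j, Real.cos (σ j * t j) := by
  refine Finset.sum_congr rfl fun σ _ => ?_
  rw [signOf, ← Finset.prod_mul_distrib]
  refine Finset.prod_congr rfl fun j _ => ?_
  have := Real.sin_int_mul_pi (σ j * (ε j : ℕ))
  push_cast at this
  rw [halfShift, mul_add, Real.cos_add, ← mul_assoc, this]
  ring

/-- The normalised step polynomial is dominated by a Gaussian on every translate of the box. On
the box itself all cosines are nonnegative, so signs can only decrease the absolute value; and for
each `j` some step has `σ j = ±1`, so that `|S| - charSum S t ≥ (2/π²) (t j)²`. Averaging over `j`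
gives the bound. -/
theorem abs_charSum_halfShift_le {d : ℕ} {S : Finset (Fin d → ℤ)}
    (hd : 1 ≤ d) (hS : 0 < S.card)
    (hstep : ∀ σ ∈ S, ∀ j, σ j = -1 ∨ σ j = 0 ∨ σ j = 1)
    (hnt : ∀ j, ∃ σ ∈ S, σ j ≠ 0) (ε : Fin d → Fin 2)
    (t : Fin d → ℝ) (ht : ∀ j, |t j| ≤ Real.pi / 2) :
    |charSum S (halfShift ε t) / S.card| ≤
      Real.exp (-(2 / (Real.pi ^ 2 * S.card * d)) * ∑ j, t j ^ 2) := by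
  have hS' : (0 : ℝ) < S.card := by exact_mod_cast hS
  have hd' : (0 : ℝ) < d := by exact_mod_cast hd
  have h1 : |charSum S (halfShift ε t)| ≤ charSum S t := by
    rw [charSum_halfShift]
    refine (Finset.abs_sum_le_sum_abs _ _).trans (Finset.sum_le_sum fun σ hσ => ?_)
    have hc := (prod_cos_bounds σ (hstep σ hσ) t ht ⟨0, hd⟩).1
    rw [abs_mul, abs_of_nonneg hc]
    rcases signOf_eq ε σ with h | h <;> simp [h]
  have h2 : ∀ j, 2 / Real.pi ^ 2 * t j ^ 2 ≤ S.card - charSum S t := by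
    intro j
    obtain ⟨σ, hσ, hne⟩ := hnt j
    have e : (S.card : ℝ) - charSum S t = ∑ σ ∈ S, (1 - ∏ j, Real.cos (σ j * t j)) := by
      simp [charSum]
    have hb := fun σ hσ => (prod_cos_bounds σ (hstep σ hσ) t ht j).2
    have hsq : ((σ j : ℤ) : ℝ) ^ 2 = 1 := by
      rcases hstep σ hσ j with h | h | h
      · simp [h]
      · exact absurd h hne
      · simp [h]
    rw [e]
    refine le_trans ?_ (Finset.single_le_sum (fun τ hτ => ?_) hσ)
    · have := hb σ hσ
      rw [mul_pow, hsq] at this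
      linarith
    · have := hb τ hτ
      have h3 : 0 ≤ 2 / Real.pi ^ 2 * ((τ j : ℝ) * t j) ^ 2 := by positivity
      linarith
  have h3 : 2 / Real.pi ^ 2 * ∑ j, t j ^ 2 ≤ d * (S.card - charSum S t) := by
    rw [Finset.mul_sum]
    refine (Finset.sum_le_card_nsmul _ _ _ fun j _ => h2 j).trans (by simp)
  rw [abs_div, abs_of_pos hS']
  refine (div_le_div_of_nonneg_right h1 hS'.le).trans ?_
  refine le_trans ?_ (Real.add_one_le_exp _)
  rw [div_le_iff₀ hS']
  have h4 : (-(2 / (Real.pi ^ 2 * S.card * d)) * ∑ j, t j ^ 2 + 1) * S.card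
      = S.card - (2 / Real.pi ^ 2 * ∑ j, t j ^ 2) / d := by
    have := Real.pi_pos.ne'
    field_simp
    ring
  rw [h4]
  have h5 : (2 / Real.pi ^ 2 * ∑ j, t j ^ 2) / d ≤ S.card - charSum S t := by
    rw [div_le_iff₀ hd']
    linarith
  linarith

/-- An integrable function dominating `scaled S m ε` for all `m ≥ 1` and all `ε`. -/
noncomputable def domin {d : ℕ} (S : Finset (Fin d → ℤ)) (u : Fin d → ℝ) : ℝ :=
  ∏ j, (1 / Real.pi * (u j ^ 2 * Real.exp (-(2 / (Real.pi ^ 2 * S.card * d)) * u j ^ 2)))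

theorem domin_nonneg {d : ℕ} (S : Finset (Fin d → ℤ)) (u : Fin d → ℝ) : 0 ≤ domin S u :=
  Finset.prod_nonneg fun _ _ => by positivity

theorem integrable_domin {d : ℕ} {S : Finset (Fin d → ℤ)} (hd : 1 ≤ d) (hS : 0 < S.card) :
    MeasureTheory.Integrable (domin S) := by
  have hS' : (0 : ℝ) < S.card := by exact_mod_cast hS
  have hd' : (0 : ℝ) < d := by exact_mod_cast hd
  refine MeasureTheory.Integrable.fintype_prod (f := fun _ x => 1 / Real.pi *
    (x ^ 2 * Real.exp (-(2 / (Real.pi ^ 2 * S.card * d)) * x ^ 2))) fun _ => ?_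
  have := integrable_rpow_mul_exp_neg_mul_sq
    (b := 2 / (Real.pi ^ 2 * S.card * d)) (by positivity) (s := 2) (by norm_num)
  simp only [Real.rpow_two] at this
  exact this.const_mul _

theorem abs_scaled_le {d : ℕ} {S : Finset (Fin d → ℤ)}
    (hd : 1 ≤ d) (hS : 0 < S.card)
    (hstep : ∀ σ ∈ S, ∀ j, σ j = -1 ∨ σ j = 0 ∨ σ j = 1)
    (hnt : ∀ j, ∃ σ ∈ S, σ j ≠ 0) (ε : Fin d → Fin 2) (m : ℕ) (hm : 1 ≤ m)
    (u : Fin d → ℝ) : |scaled S m ε u| ≤ domin S u := by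
  have hm' : (0 : ℝ) < m := by exact_mod_cast hm
  have hs : 0 < √(m : ℝ) := Real.sqrt_pos.2 hm'
  by_cases hu : ∀ j, |u j / √m| ≤ Real.pi / 2
  · have h1 := abs_charSum_halfShift_le hd hS hstep hnt ε _ hu
    rw [scaled, abs_mul, abs_pow]
    have h2 := pow_le_pow_left₀ (abs_nonneg _) h1 m
    have h3 : Real.exp (-(2 / (Real.pi ^ 2 * S.card * d)) * ∑ j, (u j / √m) ^ 2) ^ m
        = ∏ j, Real.exp (-(2 / (Real.pi ^ 2 * S.card * d)) * u j ^ 2) := by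
      rw [← Real.exp_nat_mul, ← Real.exp_sum]
      congr 1
      rw [← Finset.mul_sum, mul_left_comm, Finset.mul_sum]
      congr 1
      refine Finset.sum_congr rfl fun j _ => ?_
      rw [div_pow, Real.sq_sqrt hm'.le]
      field_simp
    rw [h3] at h2
    refine (mul_le_mul_of_nonneg_right h2 (abs_nonneg _)).trans ?_
    rw [domin, Finset.abs_prod, ← Finset.prod_mul_distrib]
    refine Finset.prod_le_prod (fun j _ => by positivity) fun j _ => ?_
    have h4 : (√m * Real.sin (u j / √m)) ^ 2 ≤ u j ^ 2 := by
      have := @Real.sin_sq_le_sq (u j / √m)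
      calc (√m * Real.sin (u j / √m)) ^ 2 = √m ^ 2 * Real.sin (u j / √m) ^ 2 := by ring
        _ ≤ √m ^ 2 * (u j / √m) ^ 2 := by gcongr
        _ = u j ^ 2 := by field_simp
    have h5 := wt_le (u j / √m)
    have h6 := wt_nonneg (u j / √m)
    rw [abs_of_nonneg (by positivity)]
    calc _ ≤ Real.exp (-(2 / (Real.pi ^ 2 * S.card * d)) * u j ^ 2)
          * (1 / Real.pi * u j ^ 2) := by gcongr
      _ = _ := by ring
  -- Outside the rescaled box the integrand vanishes.
  · push Not at hu
    obtain ⟨j, hj⟩ := hu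
    have h0 : wt (u j / √m) = 0 := by
      refine Set.indicator_of_notMem (fun h => ?_) _
      exact absurd (abs_le.2 h) (not_le.2 hj)
    rw [scaled, Finset.prod_eq_zero (Finset.mem_univ j) (by simp [h0])]
    simpa using domin_nonneg S u

/-! ### Pointwise limits -/

open Filter Topology in
theorem tendsto_div_sqrt (x : ℝ) : Tendsto (fun m : ℕ => x / √(m : ℝ)) atTop (𝓝 0) :=
  (Real.tendsto_sqrt_atTop.comp tendsto_natCast_atTop_atTop).const_div_atTop x

theorem sin_eq_mul_sinc (x : ℝ) : Real.sin x = x * Real.sinc x := by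
  by_cases h : x = 0
  · simp [h]
  · rw [Real.sinc_of_ne_zero h]
    field_simp

open Filter Topology in
theorem tendsto_sqrt_mul_sin (x : ℝ) :
    Tendsto (fun m : ℕ => √(m : ℝ) * Real.sin (x / √m)) atTop (𝓝 x) := by
  have h := (Real.continuous_sinc.tendsto 0).comp (tendsto_div_sqrt x)
  have h2 := h.const_mul x
  rw [Real.sinc_zero, mul_one] at h2
  refine h2.congr' ?_
  filter_upwards [eventually_ge_atTop 1] with m hm
  have hs : 0 < √(m : ℝ) := Real.sqrt_pos.2 (by exact_mod_cast hm)
  simp only [Function.comp_apply]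
  rw [sin_eq_mul_sinc (x / √m)]
  field_simp

open Filter Topology in
theorem tendsto_mul_one_sub_cos (x : ℝ) :
    Tendsto (fun m : ℕ => (m : ℝ) * (1 - Real.cos (x / √m))) atTop (𝓝 (x ^ 2 / 2)) := by
  have h := ((tendsto_sqrt_mul_sin (x / 2)).pow 2).const_mul 2
  have e : 2 * (x / 2) ^ 2 = x ^ 2 / 2 := by ring
  rw [e] at h
  refine h.congr fun m => ?_
  -- `1 - cos y = 2 sin² (y / 2)`
  have h1 : Real.cos (x / √m) = 1 - 2 * Real.sin (x / 2 / √m) ^ 2 := by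
    have : x / √m = 2 * (x / 2 / √m) := by ring
    rw [this, Real.cos_two_mul, Real.cos_sq']
    ring
  rw [h1, mul_pow, Real.sq_sqrt (Nat.cast_nonneg m)]
  ring

open Filter Topology in
theorem tendsto_mul_one_sub_prod_cos {ι : Type*} (J : Finset ι) (x : ι → ℝ) :
    Tendsto (fun m : ℕ => (m : ℝ) * (1 - ∏ j ∈ J, Real.cos (x j / √m))) atTop
      (𝓝 (∑ j ∈ J, x j ^ 2 / 2)) := by
  induction J using Finset.induction_on with
  | empty => simp
  | insert j J hj ih =>
    have hc : Tendsto (fun m : ℕ => Real.cos (x j / √(m : ℝ))) atTop (𝓝 1) := by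
      have h := (Real.continuous_cos.tendsto 0).comp (tendsto_div_sqrt (x j))
      rwa [Real.cos_zero] at h
    have h := (tendsto_mul_one_sub_cos (x j)).add (hc.mul ih)
    rw [one_mul, ← Finset.sum_insert (f := fun j => x j ^ 2 / 2) hj] at h
    refine h.congr fun m => ?_
    rw [Finset.prod_insert hj]
    ring

/-- Half the quadratic form of second moments of a uniform step. It is diagonal because `S` is
symmetric in each coordinate. -/
noncomputable def quad {d : ℕ} (S : Finset (Fin d → ℤ)) (u : Fin d → ℝ) : ℝ :=
  (∑ σ ∈ S, ∑ j, (σ j * u j) ^ 2 / 2) / S.card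

open Filter Topology in
/-- The central limit theorem for a uniform step, at the level of characteristic functions. -/
theorem tendsto_charSum_pow {d : ℕ} {S : Finset (Fin d → ℤ)} (hS : 0 < S.card)
    (u : Fin d → ℝ) :
    Tendsto (fun m : ℕ => (charSum S (fun j => u j / √m) / S.card) ^ m) atTop
      (𝓝 (Real.exp (-quad S u))) := by
  have hS' : (0 : ℝ) < S.card := by exact_mod_cast hS
  have h : Tendsto (fun m : ℕ => (m : ℝ) * (charSum S (fun j => u j / √m) / S.card - 1)) atTop
      (𝓝 (-quad S u)) := by
    have h1 := ((tendsto_finsetSum S fun σ _ => tendsto_mul_one_sub_prod_cos Finset.univ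
      fun j => (σ j * u j : ℝ)).div_const (S.card : ℝ)).neg
    refine h1.congr fun m => ?_
    rw [← Finset.mul_sum, Finset.sum_sub_distrib]
    simp only [charSum, mul_div_assoc, Finset.sum_const, nsmul_eq_mul, mul_one]
    field_simp
    ring
  simpa using Real.tendsto_one_add_pow_exp_of_tendsto h

open Filter Topology in
theorem tendsto_pow_self_zero {a : ℕ → ℝ} {r : ℝ} (ha : Tendsto a atTop (𝓝 r)) (hr : |r| < 1) :
    Tendsto (fun m => a m ^ m) atTop (𝓝 0) := by
  obtain ⟨ρ, h1, h2⟩ := exists_between hr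
  have h0 : 0 ≤ ρ := (abs_nonneg r).trans h1.le
  refine squeeze_zero_norm' ?_ (tendsto_pow_atTop_nhds_zero_of_lt_one h0 h2)
  filter_upwards [ha.abs.eventually (gt_mem_nhds h1)] with m hm
  rw [norm_pow]
  exact pow_le_pow_left₀ (norm_nonneg _) hm.le m

/-- If the signs disagree, the centre of the translated box is not a maximum of `|charSum S|`. -/
theorem abs_sum_signOf_lt {d : ℕ} {S : Finset (Fin d → ℤ)} {ε : Fin d → Fin 2}
    (h : ¬ ∀ σ ∈ S, ∀ τ ∈ S, signOf ε σ = signOf ε τ) :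
    |∑ σ ∈ S, signOf ε σ| < S.card := by
  push Not at h
  obtain ⟨σ, hσ, τ, hτ, hne⟩ := h
  have hle : ∀ ρ ∈ S, signOf ε ρ ≤ 1 := fun ρ _ => by
    rcases signOf_eq ε ρ with h | h <;> rw [h]; norm_num
  have hge : ∀ ρ ∈ S, -1 ≤ signOf ε ρ := fun ρ _ => by
    rcases signOf_eq ε ρ with h | h <;> rw [h]; norm_num
  have hm : ∃ ρ ∈ S, signOf ε ρ = -1 := by
    rcases signOf_eq ε σ with h | h
    · rcases signOf_eq ε τ with h' | h'
      · exact absurd (h.trans h'.symm) hne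
      · exact ⟨τ, hτ, h'⟩
    · exact ⟨σ, hσ, h⟩
  have hp : ∃ ρ ∈ S, signOf ε ρ = 1 := by
    rcases signOf_eq ε σ with h | h
    · exact ⟨σ, hσ, h⟩
    · rcases signOf_eq ε τ with h' | h'
      · exact ⟨τ, hτ, h'⟩
      · exact absurd (h.trans h'.symm) hne
  rw [abs_lt]
  constructor
  · have := Finset.sum_lt_sum hge (by
      obtain ⟨ρ, hρ, e⟩ := hp
      exact ⟨ρ, hρ, by rw [e]; norm_num⟩)
    simpa using this
  · have := Finset.sum_lt_sum hle (by
      obtain ⟨ρ, hρ, e⟩ := hm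
      exact ⟨ρ, hρ, by rw [e]; norm_num⟩)
    simpa using this

/-- The pointwise limit of `scaled S (2 * n) ε`. Only those translates contribute on which all
terms of `charSum S` carry the same sign. -/
noncomputable def limitFn {d : ℕ} (S : Finset (Fin d → ℤ)) (ε : Fin d → Fin 2)
    (u : Fin d → ℝ) : ℝ :=
  (if ∀ σ ∈ S, ∀ τ ∈ S, signOf ε σ = signOf ε τ then Real.exp (-quad S u) else 0) *
    ∏ j, (1 / Real.pi * u j ^ 2)

theorem limitFn_nonneg {d : ℕ} (S : Finset (Fin d → ℤ)) (ε : Fin d → Fin 2)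
    (u : Fin d → ℝ) : 0 ≤ limitFn S ε u := by
  unfold limitFn
  refine mul_nonneg ?_ (Finset.prod_nonneg fun _ _ => by positivity)
  split_ifs <;> positivity

open Filter Topology in
theorem tendsto_even : Tendsto (fun n : ℕ => 2 * n) atTop atTop :=
  tendsto_id.const_mul_atTop' (by norm_num)

open Filter Topology in
/-- Along even exponents a common sign `-1` disappears, so all maxima of `|charSum S|` contribute
equally; along all exponents the sequence may oscillate. -/
theorem tendsto_scaled {d : ℕ} {S : Finset (Fin d → ℤ)} (hS : 0 < S.card)
    (ε : Fin d → Fin 2) (u : Fin d → ℝ) :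
    Tendsto (fun n : ℕ => scaled S (2 * n) ε u) atTop (𝓝 (limitFn S ε u)) := by
  have hS' : (0 : ℝ) < S.card := by exact_mod_cast hS
  refine Tendsto.mul ?_ ?_
  · split_ifs with h
    · obtain ⟨s, hs, hs'⟩ : ∃ s : ℝ, s ^ 2 = 1 ∧ ∀ σ ∈ S, signOf ε σ = s := by
        obtain ⟨τ, hτ⟩ := Finset.card_pos.1 hS
        exact ⟨signOf ε τ, sq_eq_one_iff.2 (signOf_eq ε τ), fun σ hσ => h σ hσ τ hτ⟩
      refine ((tendsto_charSum_pow hS u).comp tendsto_even).congr fun n => ?_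
      simp only [Function.comp_apply]
      rw [charSum_halfShift, Finset.sum_congr rfl fun σ hσ => by rw [hs' σ hσ],
        ← Finset.mul_sum, mul_div_assoc, mul_pow, pow_mul s, hs, one_pow, one_mul]
      rfl
    -- The base tends to the mean of the signs, which has absolute value less than `1`.
    · have h1 : Tendsto (fun m : ℕ => charSum S (halfShift ε fun j => u j / √(m : ℝ)) / S.card)
          atTop (𝓝 ((∑ σ ∈ S, signOf ε σ) / S.card)) := by
        refine Tendsto.div_const ?_ _
        simp only [charSum_halfShift]
        refine tendsto_finsetSum S fun σ _ => ?_
        have h2 : Tendsto (fun m : ℕ => ∏ j, Real.cos (σ j * (u j / √(m : ℝ)))) atTop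
            (𝓝 (∏ _j : Fin d, 1)) := by
          refine tendsto_finsetProd _ fun j _ => ?_
          have h3 := (tendsto_div_sqrt (u j)).const_mul (σ j : ℝ)
          rw [mul_zero] at h3
          have h4 := (Real.continuous_cos.tendsto 0).comp h3
          rwa [Real.cos_zero] at h4
        simpa using h2.const_mul (signOf ε σ)
      refine (tendsto_pow_self_zero h1 ?_).comp tendsto_even
      rw [abs_div, abs_of_pos hS', div_lt_one hS']
      exact abs_sum_signOf_lt h
  · refine Tendsto.comp (g := fun m : ℕ => ∏ j, (wt (u j / √m) * (√m * Real.sin (u j / √m)) ^ 2))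
      (tendsto_finsetProd _ fun j _ => ?_) tendsto_even
    refine Tendsto.mul ?_ ((tendsto_sqrt_mul_sin (u j)).pow 2)
    refine tendsto_const_nhds.congr' ?_
    have := Real.pi_pos
    filter_upwards [(tendsto_div_sqrt (u j)).eventually
      (Icc_mem_nhds (show -(Real.pi / 2) < 0 by linarith) (show 0 < Real.pi / 2 by linarith))]
      with m hm
    exact (Set.indicator_of_mem (s := Set.Icc (-(Real.pi / 2)) (Real.pi / 2)) hm
      fun _ => 1 / Real.pi).symm

theorem integrable_limitFn {d : ℕ} {S : Finset (Fin d → ℤ)}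
    (hd : 1 ≤ d) (hS : 0 < S.card)
    (hstep : ∀ σ ∈ S, ∀ j, σ j = -1 ∨ σ j = 0 ∨ σ j = 1)
    (hnt : ∀ j, ∃ σ ∈ S, σ j ≠ 0) (ε : Fin d → Fin 2) :
    MeasureTheory.Integrable (limitFn S ε) := by
  refine (integrable_domin hd hS).mono' ?_ (Filter.Eventually.of_forall fun u => ?_)
  · exact (measurable_of_tendsto_metrizable (fun n => measurable_scaled S (2 * n) ε)
      (tendsto_pi_nhds.2 fun u => tendsto_scaled hS ε u)).aestronglyMeasurable
  · refine le_of_tendsto (tendsto_scaled hS ε u).norm ?_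
    filter_upwards [Filter.eventually_ge_atTop 1] with n hn
    exact abs_scaled_le hd hS hstep hnt ε (2 * n) (by omega) u

/-- The untranslated box always contributes: for `ε = 0` all signs are `1`. -/
theorem integral_limitFn_zero_pos {d : ℕ} {S : Finset (Fin d → ℤ)}
    (hd : 1 ≤ d) (hS : 0 < S.card)
    (hstep : ∀ σ ∈ S, ∀ j, σ j = -1 ∨ σ j = 0 ∨ σ j = 1)
    (hnt : ∀ j, ∃ σ ∈ S, σ j ≠ 0) : 0 < ∫ u, limitFn S 0 u := by
  rw [MeasureTheory.integral_pos_iff_support_of_nonneg (limitFn_nonneg S 0)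
    (integrable_limitFn hd hS hstep hnt 0)]
  have h : Function.support (limitFn S 0) = {u | ∏ j, u j ≠ 0} := by
    ext u
    simp [limitFn, signOf_zero, Finset.prod_eq_zero_iff, Real.pi_ne_zero]
  rw [h]
  refine IsOpen.measure_pos _ ?_ ⟨fun _ => 1, by simp⟩
  exact isOpen_ne_fun (by fun_prop) continuous_const

end OrthantWalk

/-! ### Asymptotics -/

open OrthantWalk

/-- Excursion asymptotics: `e(n)` grows as `|S|^n n^{-3d/2}`. -/
theorem excursion_asymptotics
    (d : ℕ) (hd : 1 ≤ d) (S : Finset (Fin d → ℤ))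
    (hstep : IsStepset d S) (hrefl : Reflectable d S) (hnt : NontrivialStepset d S) :
    (∃ γ : ℝ, 0 < γ ∧
      Filter.Tendsto
        (fun n : ℕ => (excursions d S (2 * n) : ℝ) * ((S.card : ℝ)) ^ (-(2 * n : ℤ))
            * ((2 * n : ℕ) : ℝ) ^ (3 * (d : ℝ) / 2))
        Filter.atTop (nhds γ)) ∧
    (∃ C : ℝ, 0 < C ∧ ∀ n : ℕ, 1 ≤ n →
      (excursions d S n : ℝ) ≤ C * (S.card : ℝ) ^ n * (n : ℝ) ^ (-(3 * (d : ℝ)) / 2)) := by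
  have hS : 0 < S.card := by
    obtain ⟨σ, hσ, -⟩ := hnt ⟨0, hd⟩
    exact Finset.card_pos.2 ⟨σ, hσ⟩
  have hS' : (0 : ℝ) < S.card := by exact_mod_cast hS
  refine ⟨⟨∑ ε : Fin d → Fin 2, ∫ u, limitFn S ε u, ?_, ?_⟩, ?_⟩
  · exact Finset.sum_pos'
      (fun ε _ => MeasureTheory.integral_nonneg (limitFn_nonneg S ε))
      ⟨0, Finset.mem_univ _, integral_limitFn_zero_pos hd hS hstep hnt⟩
  · have h : Filter.Tendsto (fun n : ℕ => ∑ ε : Fin d → Fin 2, ∫ u, scaled S (2 * n) ε u)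
        Filter.atTop (nhds (∑ ε : Fin d → Fin 2, ∫ u, limitFn S ε u)) := by
      refine tendsto_finsetSum _ fun ε _ => ?_
      refine MeasureTheory.tendsto_integral_filter_of_dominated_convergence (domin S)
        (Filter.Eventually.of_forall fun n => (measurable_scaled S (2 * n) ε).aestronglyMeasurable)
        ?_ (integrable_domin hd hS) (Filter.Eventually.of_forall fun u => tendsto_scaled hS ε u)
      filter_upwards [Filter.eventually_ge_atTop 1] with n hn
      exact Filter.Eventually.of_forall fun u =>
        abs_scaled_le hd hS hstep hnt ε (2 * n) (by omega) u
    refine h.congr fun n => ?_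
    rw [← excursions_eq_integral hstep hrefl, zpow_neg]
    norm_cast
  · have hI : 0 ≤ ∫ u, domin S u := MeasureTheory.integral_nonneg (domin_nonneg S)
    refine ⟨2 ^ d * (∫ u, domin S u) + 1, by positivity, fun n hn => ?_⟩
    have hn' : (0 : ℝ) < n := by exact_mod_cast hn
    have h1 : (excursions d S n : ℝ) * ((S.card : ℝ) ^ n)⁻¹ * (n : ℝ) ^ (3 * (d : ℝ) / 2)
        ≤ 2 ^ d * (∫ u, domin S u) + 1 := by
      rw [excursions_eq_integral hstep hrefl]
      refine (Finset.sum_le_card_nsmul _ _ (∫ u, domin S u) fun ε _ => ?_).trans ?_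
      · refine (Real.le_norm_self _).trans (MeasureTheory.norm_integral_le_of_norm_le
          (integrable_domin hd hS) (Filter.Eventually.of_forall fun u => ?_))
        exact abs_scaled_le hd hS hstep hnt ε n hn u
      · simp
    have hp : (0 : ℝ) < (n : ℝ) ^ (3 * (d : ℝ) / 2) := Real.rpow_pos_of_pos hn' _
    rw [neg_div, Real.rpow_neg hn'.le, ← div_eq_mul_inv, le_div_iff₀ hp]
    rw [mul_right_comm, ← div_eq_mul_inv, div_le_iff₀ (by positivity)] at h1
    exact h1
end

section
/- Let S ⊆ {−1,0,1}^d be a nontrivial reflectable stepset and let α ∈ (ℝ_{>0})^d satisfy α_j ≥ 1 for every j, and set r := #{j : α_j = 1}. Then q_α(n)·S(α)^{−n}·n^{r/2} converges as n → ∞ to the explicit positive constant γ = ∏_{j : α_j > 1} (1 − α_j^{−2}) · ∏_{j : α_j = 1} √(S(α)/(π·P_j)), where P_j := Σ_{σ∈S, σ_j = 1} ∏_{k≠j} α_k^{σ_k}. -/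
/-!
The proof is probabilistic. A reflectable set `S ⊆ {-1, 0, 1}^d` consists of all sign choices on the
supports `T` from some family of subsets of the coordinates. Choose each step `σ` with probability
proportional to `α ^ σ`. Then `qcount d S α n / S(α) ^ n` is the probability that the walk stays in
the orthant. Given the sequence of supports `T₁, …, Tₙ`, the coordinates are independent, and the
`j`-th one is a `±1` walk of length `N_j = #{i | j ∈ T_i}` with step probabilities proportional to
`α_j` and `α_j⁻¹`. Hence the normalized count is the mean of `∏ j, f_j (N_j)`, where `f_j m` is the
probability that the one-dimensional walk of length `m` stays nonnegative (`qcount_mul_zpow_eq`,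
resting on `orthantCount_eq_iidMean` and `Reflectable.sum_prod`).

In one dimension, `f_j m → 1 - α_j⁻²` if `α_j > 1`, by comparison with a harmonic function
(`tendsto_survival_of_one_lt`). If `α_j = 1`, the reflection principle gives
`f_j m = choose m ⌈m/2⌉ / 2 ^ m`, so Wallis' product gives `f_j m * √m → √(2 / π)`
(`tendsto_survival_one`).

The count `N_j` is a sum of `n` independent indicators of probability
`q_j = (α_j + α_j⁻¹) P_j / S(α)`, so `N_j / n` is close to `q_j` outside an event of exponentially
small probability. That event stays negligible after multiplication by `n ^ (r / 2)`
(`tendsto_iidMean_visits`), and the limit is obtained by substituting `N_j ∼ q_j n`.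
-/


open scoped BigOperators Classical Real

noncomputable def qcount (d : ℕ) (S : Finset (Fin d → ℤ)) (α : Fin d → ℝ) (n : ℕ) : ℝ :=
  ∑ w ∈ Finset.univ.filter
      (fun w : Fin n → {σ // σ ∈ S} => Confined d (fun i => (w i).1)),
    ∏ j, α j ^ (∑ i, (w i).1 j)

noncomputable def inventory (d : ℕ) (S : Finset (Fin d → ℤ)) (x : Fin d → ℝ) : ℝ :=
  ∑ σ ∈ S, ∏ j, x j ^ (σ j)

/-! ### Survival of one-dimensional walks -/

/-- Weighted count of `±1` walks of length `m` that start at `x`, with weight `a` per up-step and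
`a⁻¹` per down-step, all of whose positions (the starting point included) are nonnegative.
The value at a negative starting point is `0`. -/
noncomputable def halfLineCount (a : ℝ) : ℕ → ℤ → ℝ
  | 0, x => if x < 0 then 0 else 1
  | m + 1, x =>
      if x < 0 then 0
      else a * halfLineCount a m (x + 1) + a⁻¹ * halfLineCount a m (x - 1)

lemma halfLineCount_of_neg (a : ℝ) (m : ℕ) {x : ℤ} (hx : x < 0) : halfLineCount a m x = 0 := by
  cases m <;> simp [halfLineCount, hx]

lemma halfLineCount_zero_of_nonneg (a : ℝ) {x : ℤ} (hx : 0 ≤ x) : halfLineCount a 0 x = 1 := by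
  simp [halfLineCount, not_lt.2 hx]

lemma halfLineCount_succ_of_nonneg (a : ℝ) (m : ℕ) {x : ℤ} (hx : 0 ≤ x) :
    halfLineCount a (m + 1) x
      = a * halfLineCount a m (x + 1) + a⁻¹ * halfLineCount a m (x - 1) := by
  simp [halfLineCount, not_lt.2 hx]

lemma halfLineCount_nonneg {a : ℝ} (ha : 0 < a) (m : ℕ) (x : ℤ) : 0 ≤ halfLineCount a m x := by
  induction m generalizing x with
  | zero => simp only [halfLineCount]; split_ifs <;> norm_num
  | succ m ih =>
    rcases lt_or_ge x 0 with hx | hx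
    · rw [halfLineCount_of_neg a _ hx]
    · rw [halfLineCount_succ_of_nonneg a m hx]
      have := ih (x + 1)
      have := ih (x - 1)
      positivity

lemma halfLineCount_le {a : ℝ} (ha : 0 < a) (m : ℕ) (x : ℤ) :
    halfLineCount a m x ≤ (a + a⁻¹) ^ m := by
  induction m generalizing x with
  | zero => simp only [halfLineCount]; split_ifs <;> norm_num
  | succ m ih =>
    rcases lt_or_ge x 0 with hx | hx
    · rw [halfLineCount_of_neg a _ hx]; positivity
    · rw [halfLineCount_succ_of_nonneg a m hx, pow_succ, mul_comm _ (a + a⁻¹), add_mul]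
      gcongr
      · exact ih _
      · exact ih _

/-- The probability that a `±1` walk of length `m` from `0`, with step probabilities proportional
to `a` (up) and `a⁻¹` (down), stays nonnegative. -/
noncomputable def survival (a : ℝ) (m : ℕ) : ℝ := halfLineCount a m 0 / (a + a⁻¹) ^ m

lemma survival_nonneg {a : ℝ} (ha : 0 < a) (m : ℕ) : 0 ≤ survival a m :=
  div_nonneg (halfLineCount_nonneg ha m 0) (by positivity)

lemma survival_le_one {a : ℝ} (ha : 0 < a) (m : ℕ) : survival a m ≤ 1 :=
  div_le_one_of_le₀ (halfLineCount_le ha m 0) (by positivity)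

/-- The function `1 - a^{-2(x+1)}` is harmonic for the walk and vanishes at `-1`, so it bounds
the survival probability from `x` below. -/
lemma le_halfLineCount {a : ℝ} (ha : 1 < a) (m : ℕ) (x : ℤ) (hx : -1 ≤ x) :
    (1 - (a⁻¹) ^ (2 * (x + 1))) * (a + a⁻¹) ^ m ≤ halfLineCount a m x := by
  have ha0 : 0 < a := by linarith
  induction m generalizing x with
  | zero =>
    rcases lt_or_ge x 0 with h | h
    · obtain rfl : x = -1 := by omega
      simp [halfLineCount]
    · rw [halfLineCount_zero_of_nonneg a h]
      have : 0 < (a⁻¹) ^ (2 * (x + 1)) := by positivity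
      simp
      positivity
  | succ m ih =>
    rcases lt_or_ge x 0 with h | h
    · obtain rfl : x = -1 := by omega
      simp [halfLineCount]
    · rw [halfLineCount_succ_of_nonneg a m h]
      have h1 := mul_le_mul_of_nonneg_left (ih (x + 1) (by omega)) ha0.le
      have h2 := mul_le_mul_of_nonneg_left (ih (x - 1) (by omega)) (inv_pos.2 ha0).le
      refine le_trans (le_of_eq ?_) (add_le_add h1 h2)
      have e1 : (a⁻¹) ^ (2 * (x + 1 + 1)) = (a⁻¹) ^ (2 * (x + 1)) * (a⁻¹ * a⁻¹) := by
        rw [show 2 * (x + 1 + 1) = 2 * (x + 1) + 1 + 1 by ring, zpow_add_one₀ (by positivity),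
          zpow_add_one₀ (by positivity), mul_assoc]
      have e2 : (a⁻¹) ^ (2 * (x - 1 + 1)) = (a⁻¹) ^ (2 * (x + 1)) * (a * a) := by
        rw [show 2 * (x - 1 + 1) = 2 * (x + 1) - 1 - 1 by ring, zpow_sub_one₀ (by positivity),
          zpow_sub_one₀ (by positivity), inv_inv, mul_assoc]
      rw [e1, e2, pow_succ]
      field_simp
      ring

/-- The excess over the harmonic lower bound is at most the expectation of `a^{-(X_m + 1)}`,
which decays geometrically with ratio `2 / (a + a⁻¹)`. -/
lemma halfLineCount_le_harmonic {a : ℝ} (ha : 1 < a) (m : ℕ) (x : ℤ) (hx : -1 ≤ x) :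
    halfLineCount a m x ≤
      (1 - (a⁻¹) ^ (2 * (x + 1))) * (a + a⁻¹) ^ m + (a⁻¹) ^ (x + 1) * 2 ^ m := by
  have ha0 : 0 < a := by linarith
  induction m generalizing x with
  | zero =>
    rcases lt_or_ge x 0 with h | h
    · obtain rfl : x = -1 := by omega
      simp [halfLineCount]
    · rw [halfLineCount_zero_of_nonneg a h]
      have h0 : 0 < (a⁻¹) ^ (x + 1) := by positivity
      have h1 : (a⁻¹) ^ (x + 1) ≤ 1 := by
        obtain ⟨k, hk⟩ := Int.eq_ofNat_of_zero_le (show 0 ≤ x + 1 by omega)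
        rw [hk, zpow_natCast]
        exact pow_le_one₀ (by positivity) (inv_le_one_of_one_le₀ ha.le)
      rw [two_mul, zpow_add₀ (by positivity)]
      nlinarith
  | succ m ih =>
    rcases lt_or_ge x 0 with h | h
    · obtain rfl : x = -1 := by omega
      simp [halfLineCount]
    · rw [halfLineCount_succ_of_nonneg a m h]
      have h1 := mul_le_mul_of_nonneg_left (ih (x + 1) (by omega)) ha0.le
      have h2 := mul_le_mul_of_nonneg_left (ih (x - 1) (by omega)) (inv_pos.2 ha0).le
      refine le_trans (add_le_add h1 h2) (le_of_eq ?_)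
      have e1 : (a⁻¹) ^ (2 * (x + 1 + 1)) = (a⁻¹) ^ (2 * (x + 1)) * (a⁻¹ * a⁻¹) := by
        rw [show 2 * (x + 1 + 1) = 2 * (x + 1) + 1 + 1 by ring, zpow_add_one₀ (by positivity),
          zpow_add_one₀ (by positivity), mul_assoc]
      have e2 : (a⁻¹) ^ (2 * (x - 1 + 1)) = (a⁻¹) ^ (2 * (x + 1)) * (a * a) := by
        rw [show 2 * (x - 1 + 1) = 2 * (x + 1) - 1 - 1 by ring, zpow_sub_one₀ (by positivity),
          zpow_sub_one₀ (by positivity), inv_inv, mul_assoc]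
      have e3 : (a⁻¹) ^ (x + 1 + 1) = (a⁻¹) ^ (x + 1) * a⁻¹ := zpow_add_one₀ (by positivity) _
      have e4 : (a⁻¹) ^ (x - 1 + 1) = (a⁻¹) ^ (x + 1) * a := by
        rw [show x - 1 + 1 = x + 1 - 1 by ring, zpow_sub_one₀ (by positivity), inv_inv]
      rw [e1, e2, e3, e4, pow_succ, pow_succ]
      field_simp
      ring

/-- Gambler's ruin: with upward drift the survival probability tends to `1 - a⁻²`. -/
lemma tendsto_survival_of_one_lt {a : ℝ} (ha : 1 < a) :
    Filter.Tendsto (survival a) Filter.atTop (nhds (1 - a ^ (-2 : ℤ))) := by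
  have ha0 : 0 < a := by linarith
  have hc : 2 < a + a⁻¹ := by
    have h : a + a⁻¹ - 2 = (a - 1) ^ 2 / a := by field_simp; ring
    have : 0 < (a - 1) ^ 2 / a := div_pos (pow_pos (by linarith) 2) ha0
    linarith
  have e : (a⁻¹) ^ (2 * ((0 : ℤ) + 1)) = a ^ (-2 : ℤ) := by
    rw [inv_zpow, ← zpow_neg]; norm_num
  have hlim : Filter.Tendsto (fun m : ℕ => (1 - a ^ (-2 : ℤ)) + a⁻¹ * (2 / (a + a⁻¹)) ^ m)
      Filter.atTop (nhds (1 - a ^ (-2 : ℤ))) := by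
    have h := (tendsto_pow_atTop_nhds_zero_of_lt_one (r := 2 / (a + a⁻¹)) (by positivity)
      ((div_lt_one (by linarith)).2 hc)).const_mul a⁻¹
    simpa using h.const_add (1 - a ^ (-2 : ℤ))
  refine tendsto_of_tendsto_of_tendsto_of_le_of_le tendsto_const_nhds hlim
    (fun m => ?_) (fun m => ?_)
  · have h := le_halfLineCount ha m 0 (by norm_num)
    rw [e] at h
    exact (le_div_iff₀ (by positivity)).2 h
  · have h := halfLineCount_le_harmonic ha m 0 (by norm_num)
    rw [e, zero_add, zpow_one] at h
    refine (div_le_iff₀ (by positivity)).2 (h.trans (le_of_eq ?_))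
    rw [div_pow]
    field_simp

/-- Summed Pascal recurrence; the boundary case uses `choose m ⌈m/2⌉ = choose m ⌊m/2⌋`. -/
lemma sum_choose_recurrence (m v : ℕ) :
    ∑ k ∈ Finset.range (v + 1), (m + 1).choose ((m + 1 + k + 1) / 2)
      = ∑ k ∈ Finset.range (v + 2), m.choose ((m + k + 1) / 2)
        + ∑ k ∈ Finset.range v, m.choose ((m + k + 1) / 2) := by
  induction v with
  | zero =>
    simp only [Finset.sum_range_succ, Finset.sum_range_zero, zero_add, add_zero]
    rw [show (m + 1 + 1) / 2 = m / 2 + 1 by omega, Nat.choose_succ_succ,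
      Nat.choose_symm_of_eq_add (show m = (m + 1) / 2 + m / 2 by omega)]
  | succ v ih =>
    rw [Finset.sum_range_succ, ih, Finset.sum_range_succ _ (v + 2), Finset.sum_range_succ _ v,
      show (m + 1 + (v + 1) + 1) / 2 = (m + v + 1) / 2 + 1 by omega, Nat.choose_succ_succ,
      show (m + (v + 2) + 1) / 2 = (m + v + 1) / 2 + 1 by omega]
    ring

/-- Reflection principle: walks with unit weights, counted by binomial coefficients. -/
lemma halfLineCount_one (m u : ℕ) :
    halfLineCount 1 m ((u : ℤ) - 1)
      = ((∑ k ∈ Finset.range u, m.choose ((m + k + 1) / 2) : ℕ) : ℝ) := by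
  induction m generalizing u with
  | zero =>
    cases u with
    | zero => simp [halfLineCount]
    | succ v =>
      rw [halfLineCount_zero_of_nonneg 1 (by push_cast; omega), Finset.sum_range_succ']
      have : ∀ k ∈ Finset.range v, Nat.choose 0 ((0 + (k + 1) + 1) / 2) = 0 := fun k _ =>
        Nat.choose_eq_zero_of_lt (by omega)
      rw [Finset.sum_eq_zero this]
      simp
  | succ m ih =>
    cases u with
    | zero => simp [halfLineCount]
    | succ v =>
      rw [halfLineCount_succ_of_nonneg 1 m (by push_cast; omega), sum_choose_recurrence]
      have h1 := ih (v + 2)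
      have h2 := ih v
      rw [show ((v + 1 : ℕ) : ℤ) - 1 + 1 = ((v + 2 : ℕ) : ℤ) - 1 by push_cast; ring, h1,
        show ((v + 1 : ℕ) : ℤ) - 1 - 1 = (v : ℤ) - 1 by push_cast; ring, h2]
      push_cast
      ring

lemma survival_one (m : ℕ) : survival 1 m = (m.choose ((m + 1) / 2) : ℝ) / 2 ^ m := by
  have h := halfLineCount_one m 1
  simp only [Finset.sum_range_one, add_zero, Nat.cast_one, sub_self] at h
  rw [survival, h]
  norm_num

lemma survival_one_eq_centralBinom (m : ℕ) :
    survival 1 m = (((m + 1) / 2).centralBinom : ℝ) / 4 ^ ((m + 1) / 2) := by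
  rw [survival_one]
  rcases Nat.even_or_odd' m with ⟨k, rfl | rfl⟩
  · rw [show (2 * k + 1) / 2 = k by omega, Nat.centralBinom, pow_mul]
    norm_num
  · rw [show (2 * k + 1 + 1) / 2 = k + 1 by omega, Nat.centralBinom,
      show 2 * (k + 1) = 2 * k + 1 + 1 by ring, Nat.choose_succ_succ (2 * k + 1) k,
      Nat.choose_symm_of_eq_add (show 2 * k + 1 = k + (k + 1) by ring), pow_succ 2, pow_mul,
      pow_succ (4 : ℝ)]
    push_cast
    norm_num
    field_simp
    ring

lemma centralBinom_sq_eq_wallis (k : ℕ) :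
    ((k.centralBinom : ℝ) / 4 ^ k) ^ 2 = 1 / ((2 * k + 1) * Real.Wallis.W k) := by
  have hc : (k.centralBinom : ℝ) = ((2 * k).factorial : ℝ) / (k.factorial : ℝ) ^ 2 := by
    rw [eq_div_iff (by positivity), Nat.centralBinom]
    have := Nat.choose_mul_factorial_mul_factorial (show k ≤ 2 * k by omega)
    rw [show 2 * k - k = k by omega] at this
    rw [← this]; push_cast; ring
  rw [Real.Wallis.W_eq_factorial_ratio, hc, pow_mul, show (2 : ℝ) ^ 4 = 4 ^ 2 by norm_num,
    ← pow_mul, mul_comm 2 k, pow_mul]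
  field_simp

/-- The survival probability of the unbiased walk is asymptotic to `√(2 / (π m))`. -/
lemma tendsto_survival_one :
    Filter.Tendsto (fun m : ℕ => survival 1 m * (m : ℝ) ^ (1 / 2 : ℝ)) Filter.atTop
      (nhds (Real.sqrt (2 / π))) := by
  have hk : Filter.Tendsto (fun m : ℕ => (m + 1) / 2) Filter.atTop Filter.atTop :=
    Filter.tendsto_atTop_atTop.2 fun b => ⟨2 * b, fun m hm => by omega⟩
  have hW := Real.Wallis.tendsto_W_nhds_pi_div_two.comp hk
  have hfrac : Filter.Tendsto (fun m : ℕ => (m : ℝ) / (2 * (((m + 1) / 2 : ℕ) : ℝ) + 1))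
      Filter.atTop (nhds 1) := by
    refine tendsto_of_tendsto_of_tendsto_of_le_of_le
      (tendsto_natCast_div_add_atTop (𝕜 := ℝ) (2 : ℝ)) tendsto_const_nhds
      (fun m => ?_) (fun m => ?_)
    · dsimp only
      have : 2 * (((m + 1) / 2 : ℕ) : ℝ) ≤ m + 1 := by
        exact_mod_cast (by omega : 2 * ((m + 1) / 2) ≤ m + 1)
      exact div_le_div_of_nonneg_left (by positivity) (by positivity) (by linarith)
    · have : (m : ℝ) ≤ 2 * (((m + 1) / 2 : ℕ) : ℝ) := by
        exact_mod_cast (by omega : m ≤ 2 * ((m + 1) / 2))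
      exact div_le_one_of_le₀ (by linarith) (by positivity)
  have h := (hfrac.div hW (by positivity)).sqrt
  rw [show (1 : ℝ) / (π / 2) = 2 / π by field_simp] at h
  refine h.congr fun m => ?_
  have h0 : 0 ≤ survival 1 m := survival_nonneg one_pos m
  rw [← Real.sqrt_eq_rpow, ← Real.sqrt_sq h0, ← Real.sqrt_mul (sq_nonneg _),
    survival_one_eq_centralBinom, centralBinom_sq_eq_wallis]
  congr 1
  simp only [Function.comp, Pi.div_apply]
  have := Real.Wallis.W_pos ((m + 1) / 2)
  field_simp

/-! ### Means over independent samples and concentration of visit counts -/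

/-- Average of `G` over sequences of `n` independent samples from the weights `p` on `ι`. -/
noncomputable def iidMean {ι : Type*} [Fintype ι] (p : ι → ℝ) (n : ℕ) (G : (Fin n → ι) → ℝ) : ℝ :=
  ∑ τ : Fin n → ι, (∏ i, p (τ i)) * G τ

section IidMean

variable {ι : Type*} [Fintype ι] {p : ι → ℝ} {n : ℕ}

lemma iidMean_mono (hp : ∀ t, 0 ≤ p t) {G H : (Fin n → ι) → ℝ} (h : ∀ τ, G τ ≤ H τ) :
    iidMean p n G ≤ iidMean p n H :=
  Finset.sum_le_sum fun τ _ =>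
    mul_le_mul_of_nonneg_left (h τ) (Finset.prod_nonneg fun i _ => hp (τ i))

lemma iidMean_add (G H : (Fin n → ι) → ℝ) :
    iidMean p n (fun τ => G τ + H τ) = iidMean p n G + iidMean p n H := by
  simp only [iidMean, mul_add, Finset.sum_add_distrib]

lemma iidMean_const_mul (c : ℝ) (G : (Fin n → ι) → ℝ) :
    iidMean p n (fun τ => c * G τ) = c * iidMean p n G := by
  simp only [iidMean, Finset.mul_sum]
  exact Finset.sum_congr rfl fun τ _ => by ring

lemma iidMean_sum {κ : Type*} (s : Finset κ) (G : κ → (Fin n → ι) → ℝ) :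
    iidMean p n (fun τ => ∑ j ∈ s, G j τ) = ∑ j ∈ s, iidMean p n (G j) := by
  simp only [iidMean, Finset.mul_sum]
  exact Finset.sum_comm

lemma iidMean_prod (f : ι → ℝ) :
    iidMean p n (fun τ => ∏ i, f (τ i)) = (∑ t, p t * f t) ^ n := by
  simp only [iidMean, ← Finset.prod_mul_distrib]
  exact (Fintype.sum_pow (fun t => p t * f t) n).symm

lemma iidMean_const (hp1 : ∑ t, p t = 1) (c : ℝ) : iidMean p n (fun _ => c) = c := by
  have h := iidMean_prod (p := p) (n := n) (fun _ => (1 : ℝ))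
  simp only [mul_one, hp1, one_pow, Finset.prod_const_one] at h
  have h2 := iidMean_const_mul (p := p) (n := n) c (fun _ => 1)
  rw [h] at h2
  simpa using h2

lemma abs_iidMean_le (hp : ∀ t, 0 ≤ p t) (G : (Fin n → ι) → ℝ) :
    |iidMean p n G| ≤ iidMean p n (fun τ => |G τ|) := by
  refine (Finset.abs_sum_le_sum_abs _ _).trans (Finset.sum_le_sum fun τ _ => ?_)
  rw [abs_mul, abs_of_nonneg (Finset.prod_nonneg fun i _ => hp (τ i))]

/-- Number of terms of the sequence `τ` lying in the set `A`. -/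
noncomputable def visits {ι : Type*} (A : Set ι) {n : ℕ} (τ : Fin n → ι) : ℕ :=
  ∑ i, if τ i ∈ A then 1 else 0

omit [Fintype ι] in
lemma visits_le (A : Set ι) (τ : Fin n → ι) : visits A τ ≤ n := by
  have : visits A τ ≤ ∑ _i : Fin n, 1 := Finset.sum_le_sum fun i _ => by split_ifs <;> simp
  simpa using this

/-- Chernoff-type bound on the exponential moments of a centred visit count. Positive `t` controls
the upper tail and negative `t` the lower one. -/
lemma iidMean_exp_visits_le (hp : ∀ t, 0 ≤ p t) (hp1 : ∑ t, p t = 1) (A : Set ι)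
    {t : ℝ} (ht : |t| ≤ 1) :
    iidMean p n (fun τ => Real.exp (t * (visits A τ - n * ∑ s, if s ∈ A then p s else 0)))
      ≤ Real.exp (n * t ^ 2) := by
  set q := ∑ s, if s ∈ A then p s else 0 with hq
  have hq0 : 0 ≤ q := Finset.sum_nonneg fun s _ => by split_ifs <;> simp [hp]
  have hq1 : q ≤ 1 := hp1 ▸ Finset.sum_le_sum fun s _ => by split_ifs <;> simp [hp]
  have e : ∀ τ : Fin n → ι, Real.exp (t * (visits A τ - n * q))
      = Real.exp (-(t * (n * q))) * ∏ i, (if τ i ∈ A then Real.exp t else 1) := by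
    intro τ
    have : ∏ i, (if τ i ∈ A then Real.exp t else 1) = Real.exp (t * visits A τ) := by
      simp only [visits, Nat.cast_sum, Finset.mul_sum, Real.exp_sum]
      exact Finset.prod_congr rfl fun i _ => by split_ifs <;> simp
    rw [this, ← Real.exp_add]
    ring_nf
  simp only [e]
  rw [iidMean_const_mul, iidMean_prod (fun s => if s ∈ A then Real.exp t else 1)]
  have hs : ∑ s, p s * (if s ∈ A then Real.exp t else 1) = 1 + q * (Real.exp t - 1) := by
    calc ∑ s, p s * (if s ∈ A then Real.exp t else 1)
        = ∑ s, (p s + (if s ∈ A then p s else 0) * (Real.exp t - 1)) :=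
          Finset.sum_congr rfl fun s _ => by split_ifs <;> ring
      _ = 1 + q * (Real.exp t - 1) := by rw [Finset.sum_add_distrib, hp1, hq, Finset.sum_mul]
  have hexp : Real.exp t - 1 ≤ t + t ^ 2 := by
    have := (abs_le.1 (Real.abs_exp_sub_one_sub_id_le ht)).2
    linarith
  have hle : 1 + q * (Real.exp t - 1) ≤ Real.exp (t * q + t ^ 2) := by
    have h1 := Real.add_one_le_exp (t * q + t ^ 2)
    have h2 := mul_le_mul_of_nonneg_left hexp hq0
    have h3 := mul_le_mul_of_nonneg_right hq1 (sq_nonneg t)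
    nlinarith
  have hpos : 0 ≤ 1 + q * (Real.exp t - 1) := by
    have := mul_nonneg hq0 (Real.exp_pos t).le
    nlinarith
  calc Real.exp (-(t * (n * q))) * (∑ s, p s * (if s ∈ A then Real.exp t else 1)) ^ n
      ≤ Real.exp (-(t * (n * q))) * Real.exp (t * q + t ^ 2) ^ n := by
        rw [hs]; gcongr
    _ = Real.exp (n * t ^ 2) := by
        rw [← Real.exp_nat_mul, ← Real.exp_add]
        ring_nf

/-- Expectations concentrate: if `G n N` converges to `γ` as `n → ∞` and `N / n → q`, and is bounded
by a power `n ^ e`, then the mean of `G` at the visit counts converges to `γ`. -/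
lemma tendsto_iidMean_visits {κ : Type*} [Fintype κ] (hp : ∀ t, 0 ≤ p t) (hp1 : ∑ t, p t = 1)
    (A : κ → Set ι) (q : κ → ℝ) (hq : ∀ j, q j = ∑ s, if s ∈ A j then p s else 0)
    (G : ℕ → (κ → ℕ) → ℝ) (γ e : ℝ)
    (hG : ∀ n N, (∀ j, N j ≤ n) → |G n N| ≤ (n : ℝ) ^ e)
    (hlim : Filter.Tendsto (fun x : ℕ × (κ → ℕ) => G x.1 x.2)
      (Filter.comap (fun x : ℕ × (κ → ℕ) => x.1) Filter.atTop ⊓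
        Filter.comap (fun x j => (x.2 j : ℝ) / x.1) (nhds q)) (nhds γ)) :
    Filter.Tendsto (fun n => iidMean p n (fun τ => G n (fun j => visits (A j) τ)))
      Filter.atTop (nhds γ) := by
  rw [Metric.tendsto_atTop']
  intro ε hε
  obtain ⟨n₀, δ, hδ0, hδ1, hgood⟩ : ∃ n₀ : ℕ, ∃ δ : ℝ, 0 < δ ∧ δ ≤ 1 ∧ ∀ n ≥ n₀, ∀ N : κ → ℕ,
      (∀ j, |(N j : ℝ) / n - q j| < δ) → |G n N - γ| < ε / 2 := by
    have h := hlim.eventually (Metric.ball_mem_nhds γ (half_pos hε))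
    rw [Filter.eventually_inf] at h
    obtain ⟨s, hs, t, ht, hst⟩ := h
    obtain ⟨s', hs', hss⟩ := Filter.mem_comap.1 hs
    obtain ⟨t', ht', htt⟩ := Filter.mem_comap.1 ht
    obtain ⟨n₀, hn₀⟩ := Filter.mem_atTop_sets.1 hs'
    obtain ⟨δ, hδ, hball⟩ := Metric.mem_nhds_iff.1 ht'
    refine ⟨n₀, min δ 1, lt_min hδ one_pos, min_le_right _ _, fun n hn N hN => ?_⟩
    refine hst (n, N) ⟨hss (hn₀ n hn), htt (hball ?_)⟩
    rw [Metric.mem_ball, dist_pi_lt_iff hδ]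
    exact fun j => (hN j).trans_le (min_le_left _ _)
  -- On the complement of the good event one of the two exponentials below is at least `1`.
  have hbound : ∀ n ≥ max n₀ 1, |iidMean p n (fun τ => G n (fun j => visits (A j) τ)) - γ|
      ≤ ε / 2 + ((n : ℝ) ^ e + |γ|) * (Fintype.card κ * (2 * Real.exp (-(δ ^ 2 / 4) * n))) := by
    intro n hn
    have hn0 : (0 : ℝ) < n := by
      exact_mod_cast (show 0 < n from lt_of_lt_of_le one_pos ((le_max_right _ _).trans hn))
    have hc : 0 ≤ (n : ℝ) ^ e + |γ| := by positivity
    have hsub : iidMean p n (fun τ => G n (fun j => visits (A j) τ)) - γ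
        = iidMean p n (fun τ => G n (fun j => visits (A j) τ) + -γ) := by
      rw [iidMean_add, iidMean_const hp1]; ring
    rw [hsub]
    refine (abs_iidMean_le hp _).trans ?_
    have hpt : ∀ τ : Fin n → ι, |G n (fun j => visits (A j) τ) + -γ| ≤
        ε / 2 + ((n : ℝ) ^ e + |γ|) * ∑ j, Real.exp (-(δ ^ 2 / 2) * n) *
          (Real.exp (δ / 2 * (visits (A j) τ - n * q j))
            + Real.exp (-(δ / 2) * (visits (A j) τ - n * q j))) := by
      intro τ
      by_cases hτ : ∀ j, |(visits (A j) τ : ℝ) / n - q j| < δ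
      · have h1 := hgood n ((le_max_left _ _).trans hn) _ hτ
        rw [← sub_eq_add_neg]
        refine h1.le.trans (le_add_of_nonneg_right (mul_nonneg hc ?_))
        exact Finset.sum_nonneg fun j _ => by positivity
      · push Not at hτ
        obtain ⟨j, hj⟩ := hτ
        have h1 : |G n (fun j => visits (A j) τ) + -γ| ≤ (n : ℝ) ^ e + |γ| := by
          refine (abs_add_le _ _).trans ?_
          rw [abs_neg]
          gcongr
          exact hG n _ fun j => visits_le _ _
        have h2 : (1 : ℝ) ≤ ∑ j, Real.exp (-(δ ^ 2 / 2) * n) *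
            (Real.exp (δ / 2 * (visits (A j) τ - n * q j))
              + Real.exp (-(δ / 2) * (visits (A j) τ - n * q j))) := by
          refine le_trans ?_ (Finset.single_le_sum
            (f := fun j => Real.exp (-(δ ^ 2 / 2) * n) *
              (Real.exp (δ / 2 * (visits (A j) τ - n * q j))
                + Real.exp (-(δ / 2) * (visits (A j) τ - n * q j))))
            (fun j _ => by positivity) (Finset.mem_univ j))
          rw [mul_add, ← Real.exp_add, ← Real.exp_add]
          set v := (visits (A j) τ : ℝ)
          have hv : v - n * q j = n * (v / n - q j) := by field_simp
          rw [hv]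
          rcases le_abs'.1 hj with h | h
          · have : 0 ≤ -(δ ^ 2 / 2) * n + -(δ / 2) * (n * (v / n - q j)) := by
              have := mul_nonneg (mul_nonneg hδ0.le hn0.le) (show 0 ≤ -δ - (v / n - q j) by linarith)
              nlinarith
            have := Real.one_le_exp this
            have := Real.exp_pos (-(δ ^ 2 / 2) * n + δ / 2 * (n * (v / n - q j)))
            linarith
          · have : 0 ≤ -(δ ^ 2 / 2) * n + δ / 2 * (n * (v / n - q j)) := by
              have := mul_nonneg (mul_nonneg hδ0.le hn0.le) (show 0 ≤ (v / n - q j) - δ by linarith)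
              nlinarith
            have := Real.one_le_exp this
            have := Real.exp_pos (-(δ ^ 2 / 2) * n + -(δ / 2) * (n * (v / n - q j)))
            linarith
        have h3 := le_mul_of_one_le_right hc h2
        linarith
    refine (iidMean_mono hp hpt).trans ?_
    rw [iidMean_add, iidMean_const hp1, iidMean_const_mul, iidMean_sum]
    gcongr
    have hj : ∀ j ∈ Finset.univ, iidMean p n (fun τ => Real.exp (-(δ ^ 2 / 2) * n) *
          (Real.exp (δ / 2 * (visits (A j) τ - n * q j))
            + Real.exp (-(δ / 2) * (visits (A j) τ - n * q j))))
        ≤ 2 * Real.exp (-(δ ^ 2 / 4) * n) := by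
      intro j _
      rw [iidMean_const_mul, iidMean_add, hq j]
      have h1 := iidMean_exp_visits_le (n := n) hp hp1 (A j) (t := δ / 2)
        (by rw [abs_of_pos (by linarith)]; linarith)
      have h2 := iidMean_exp_visits_le (n := n) hp hp1 (A j) (t := -(δ / 2))
        (by rw [abs_neg, abs_of_pos (by linarith)]; linarith)
      rw [neg_sq] at h2
      calc _ ≤ Real.exp (-(δ ^ 2 / 2) * n) *
              (Real.exp (n * (δ / 2) ^ 2) + Real.exp (n * (δ / 2) ^ 2)) := by gcongr
        _ = 2 * Real.exp (-(δ ^ 2 / 4) * n) := by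
            rw [← two_mul, mul_left_comm, ← Real.exp_add]
            ring_nf
    refine (Finset.sum_le_sum hj).trans ?_
    simp
  have hdecay : Filter.Tendsto (fun n : ℕ => ε / 2 + ((n : ℝ) ^ e + |γ|) *
      (Fintype.card κ * (2 * Real.exp (-(δ ^ 2 / 4) * n)))) Filter.atTop (nhds (ε / 2)) := by
    have hb : 0 < δ ^ 2 / 4 := by positivity
    have h1 := (tendsto_rpow_mul_exp_neg_mul_atTop_nhds_zero e _ hb).comp
      (tendsto_natCast_atTop_atTop (R := ℝ))
    have h2 := (tendsto_rpow_mul_exp_neg_mul_atTop_nhds_zero 0 _ hb).comp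
      (tendsto_natCast_atTop_atTop (R := ℝ))
    have h3 := ((h1.add (h2.const_mul |γ|)).const_mul ((Fintype.card κ : ℝ) * 2)).const_add (ε / 2)
    simp only [mul_zero, add_zero] at h3
    refine h3.congr fun n => ?_
    simp only [Function.comp, Real.rpow_zero]
    ring
  obtain ⟨n₁, hn₁⟩ := Filter.eventually_atTop.1 (hdecay.eventually_lt_const (half_lt_self hε))
  refine ⟨max (max n₀ 1) n₁, fun n hn => ?_⟩
  rw [Real.dist_eq]
  exact (hbound n ((le_max_left _ _).trans hn.le)).trans_lt (hn₁ n ((le_max_right _ _).trans hn.le))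

end IidMean

/-! ### Decoupling of the coordinates by support patterns -/

lemma iidMean_succ {ι : Type*} [Fintype ι] (p : ι → ℝ) (n : ℕ) (G : (Fin (n + 1) → ι) → ℝ) :
    iidMean p (n + 1) G = ∑ t, p t * iidMean p n (fun τ => G (Fin.cons t τ)) := by
  simp only [iidMean, Finset.mul_sum]
  rw [← Fintype.sum_prod_type', ← (Fin.consEquiv fun _ : Fin (n + 1) => ι).sum_comp]
  refine Finset.sum_congr rfl fun x _ => ?_
  simp only [Fin.consEquiv, Equiv.coe_fn_mk, Fin.prod_univ_succ, Fin.cons_zero, Fin.cons_succ]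
  ring

lemma visits_cons {ι : Type*} (A : Set ι) {n : ℕ} (t : ι) (τ : Fin n → ι) :
    visits A (Fin.cons t τ : Fin (n + 1) → ι) = (if t ∈ A then 1 else 0) + visits A τ := by
  rw [visits, Fin.sum_univ_succ]
  simp only [Fin.cons_zero, Fin.cons_succ]
  rfl

section Patterns

variable {d : ℕ} {S : Finset (Fin d → ℤ)}

lemma Reflectable.flip_mem (hrefl : Reflectable d S) (U : Finset (Fin d)) {σ : Fin d → ℤ}
    (hσ : σ ∈ S) : (fun j => if j ∈ U then -σ j else σ j) ∈ S := by
  induction U using Finset.induction_on with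
  | empty => simpa using hσ
  | insert a U ha ih =>
    convert hrefl _ ih a using 1
    ext j
    by_cases hj : j = a
    · subst hj; simp [ha]
    · simp [hj]

/-- The weight selecting the support patterns of a reflectable stepset: `1` if the step `𝟙_T`
belongs to `S`, and `0` otherwise. -/
noncomputable def patternWeight (S : Finset (Fin d → ℤ)) (T : Finset (Fin d)) : ℝ :=
  if (fun j => if j ∈ T then (1 : ℤ) else 0) ∈ S then 1 else 0

lemma patternWeight_nonneg (S : Finset (Fin d → ℤ)) (T : Finset (Fin d)) :
    0 ≤ patternWeight S T := by
  unfold patternWeight; split_ifs <;> norm_num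

/-- A vector with entries in `{-1, 0, 1}` lies in a reflectable set exactly when the indicator of
its support does. -/
lemma Reflectable.mem_iff_support (hrefl : Reflectable d S) {σ : Fin d → ℤ}
    (hσ : ∀ j, σ j = -1 ∨ σ j = 0 ∨ σ j = 1) {T : Finset (Fin d)}
    (hT : ∀ j, j ∈ T ↔ σ j ≠ 0) :
    σ ∈ S ↔ (fun j => if j ∈ T then (1 : ℤ) else 0) ∈ S := by
  constructor
  · intro h
    convert hrefl.flip_mem (Finset.univ.filter fun j => σ j = -1) h using 1
    ext j
    rcases hσ j with h | h | h <;> simp [hT, h]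
  · intro h
    convert hrefl.flip_mem (Finset.univ.filter fun j => σ j = -1) h using 1
    ext j
    rcases hσ j with h | h | h <;> simp [hT, h]

/-- Sums of product functions over a reflectable stepset: conditionally on the support pattern,
the signs of the coordinates are free, so the sum factors over the coordinates. -/
lemma Reflectable.sum_prod (hstep : IsStepset d S) (hrefl : Reflectable d S)
    (h : Fin d → ℤ → ℝ) :
    ∑ σ ∈ S, ∏ j, h j (σ j)
      = ∑ T, patternWeight S T * ∏ j, (if j ∈ T then h j 1 + h j (-1) else h j 0) := by
  rw [← Finset.sum_fiberwise S (fun σ => Finset.univ.filter fun j => σ j ≠ 0)]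
  refine Finset.sum_congr rfl fun T _ => ?_
  have hprod : ∏ j, (if j ∈ T then h j 1 + h j (-1) else h j 0)
      = ∑ σ ∈ Fintype.piFinset fun j => if j ∈ T then ({1, -1} : Finset ℤ) else {0},
          ∏ j, h j (σ j) := by
    rw [← Finset.prod_univ_sum]
    refine Finset.prod_congr rfl fun j _ => ?_
    split_ifs
    · rw [Finset.sum_pair (by norm_num)]
    · rw [Finset.sum_singleton]
  have hmem : ∀ σ : Fin d → ℤ,
      (σ ∈ Fintype.piFinset fun j => if j ∈ T then ({1, -1} : Finset ℤ) else {0}) ↔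
        (∀ j, σ j = -1 ∨ σ j = 0 ∨ σ j = 1) ∧ ∀ j, j ∈ T ↔ σ j ≠ 0 := by
    intro σ
    rw [Fintype.mem_piFinset, ← forall_and]
    refine forall_congr' fun j => ?_
    by_cases hj : j ∈ T <;> simp only [hj, if_true, if_false, Finset.mem_insert,
      Finset.mem_singleton, true_iff, false_iff] <;> omega
  have hT : ∀ σ : Fin d → ℤ, (Finset.univ.filter fun j => σ j ≠ 0) = T ↔
      ∀ j, j ∈ T ↔ σ j ≠ 0 := by
    intro σ
    simp only [Finset.ext_iff, Finset.mem_filter, Finset.mem_univ, true_and]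
    exact forall_congr' fun j => iff_comm
  rw [hprod, patternWeight]
  split_ifs with hw
  · rw [one_mul]
    refine Finset.sum_congr ?_ fun _ _ => rfl
    ext σ
    rw [Finset.mem_filter, hT, hmem]
    refine ⟨fun hs => ⟨hstep σ hs.1, hs.2⟩, fun hs => ⟨?_, hs.2⟩⟩
    exact (hrefl.mem_iff_support hs.1 hs.2).2 hw
  · rw [zero_mul, Finset.filter_eq_empty_iff.2, Finset.sum_empty]
    intro σ hs hs2
    exact hw ((hrefl.mem_iff_support (hstep σ hs) ((hT σ).1 hs2)).1 hs)

/-- Weighted count of walks of length `n` with steps in `S` that start at `x` and stay in the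
orthant, the starting point included. -/
noncomputable def orthantCount (S : Finset (Fin d → ℤ)) (α : Fin d → ℝ) (n : ℕ)
    (x : Fin d → ℤ) : ℝ :=
  ∑ w : Fin n → {σ // σ ∈ S},
    if ∀ k : ℕ, k ≤ n → ∀ j,
        0 ≤ x j + ∑ i ∈ Finset.univ.filter (fun i : Fin n => (i : ℕ) < k), (w i).1 j
    then ∏ j, α j ^ (∑ i, (w i).1 j) else 0

lemma qcount_eq_orthantCount (α : Fin d → ℝ) (n : ℕ) :
    qcount d S α n = orthantCount S α n 0 := by
  rw [qcount, orthantCount, Finset.sum_filter]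
  refine Finset.sum_congr rfl fun w _ => ?_
  simp [Confined]

lemma orthantCount_zero (α : Fin d → ℝ) (x : Fin d → ℤ) :
    orthantCount S α 0 x = if ∀ j, 0 ≤ x j then 1 else 0 := by
  simp [orthantCount]

/-- First-step decomposition. -/
lemma orthantCount_succ {α : Fin d → ℝ} (hα : ∀ j, 0 < α j) (n : ℕ) (x : Fin d → ℤ) :
    orthantCount S α (n + 1) x =
      if ∀ j, 0 ≤ x j then ∑ σ ∈ S, (∏ j, α j ^ σ j) * orthantCount S α n (fun j => x j + σ j)
      else 0 := by
  have hconf : ∀ (s : {σ // σ ∈ S}) (w : Fin n → {σ // σ ∈ S}),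
      (∀ k : ℕ, k ≤ n + 1 → ∀ j, 0 ≤ x j + ∑ i ∈ Finset.univ.filter
          (fun i : Fin (n + 1) => (i : ℕ) < k),
            ((Fin.cons s w : Fin (n + 1) → {σ // σ ∈ S}) i).1 j) ↔
        (∀ j, 0 ≤ x j) ∧ ∀ k : ℕ, k ≤ n → ∀ j, 0 ≤ (x j + s.1 j) +
          ∑ i ∈ Finset.univ.filter (fun i : Fin n => (i : ℕ) < k), (w i).1 j := by
    intro s w
    have hsum : ∀ k j, ∑ i ∈ Finset.univ.filter (fun i : Fin (n + 1) => (i : ℕ) < k + 1),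
        ((Fin.cons s w : Fin (n + 1) → {σ // σ ∈ S}) i).1 j
        = s.1 j + ∑ i ∈ Finset.univ.filter (fun i : Fin n => (i : ℕ) < k), (w i).1 j := by
      intro k j
      rw [Finset.sum_filter, Fin.sum_univ_succ, Finset.sum_filter]
      simp
    constructor
    · intro h
      refine ⟨fun j => by simpa using h 0 (by omega) j, fun k hk j => ?_⟩
      have := h (k + 1) (by omega) j
      rwa [hsum, ← add_assoc] at this
    · rintro ⟨h0, h⟩ k hk j
      cases k with
      | zero => simpa using h0 j
      | succ k =>
        rw [hsum, ← add_assoc]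
        exact h k (by omega) j
  rw [orthantCount, ← (Fin.consEquiv fun _ : Fin (n + 1) => {σ // σ ∈ S}).sum_comp,
    Fintype.sum_prod_type]
  simp only [Fin.consEquiv, Equiv.coe_fn_mk, hconf]
  by_cases hx : ∀ j, 0 ≤ x j
  · rw [if_pos hx, ← Finset.sum_coe_sort S]
    refine Finset.sum_congr rfl fun s _ => ?_
    rw [orthantCount, Finset.mul_sum]
    refine Finset.sum_congr rfl fun w _ => ?_
    rw [mul_ite, mul_zero, ← Finset.prod_mul_distrib]
    simp only [hx, implies_true, true_and]
    refine if_congr Iff.rfl (Finset.prod_congr rfl fun j _ => ?_) rfl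
    rw [Fin.sum_univ_succ, zpow_add₀ (hα j).ne']
    simp
  · simp [hx]

/-- Conditioning on the sequence of support patterns decouples the coordinates: the `j`-th one is
then a `±1` walk whose length is the number of patterns containing `j`. -/
lemma orthantCount_eq_iidMean (hstep : IsStepset d S) (hrefl : Reflectable d S)
    {α : Fin d → ℝ} (hα : ∀ j, 0 < α j) (n : ℕ) (x : Fin d → ℤ) :
    orthantCount S α n x = iidMean (patternWeight S) n
      (fun τ => ∏ j, halfLineCount (α j) (visits {T | j ∈ T} τ) (x j)) := by
  induction n generalizing x with
  | zero =>
    rw [orthantCount_zero]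
    simp only [iidMean, visits, Finset.univ_eq_empty, Finset.prod_empty, Finset.sum_empty, one_mul,
      Finset.univ_unique, Finset.sum_singleton, halfLineCount]
    split_ifs with h
    · exact (Finset.prod_eq_one fun j _ => if_neg (not_lt.2 (h j))).symm
    · push Not at h
      obtain ⟨j, hj⟩ := h
      symm
      exact Finset.prod_eq_zero (i := j) (Finset.mem_univ j) (if_pos hj)
  | succ n ih =>
    rw [orthantCount_succ hα, iidMean_succ]
    split_ifs with hx
    · have key : ∀ τ : Fin n → Finset (Fin d),
          ∑ σ ∈ S, (∏ j, α j ^ σ j) *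
              ∏ j, halfLineCount (α j) (visits {T | j ∈ T} τ) (x j + σ j)
            = ∑ T, patternWeight S T * ∏ j, halfLineCount (α j)
                (visits {T | j ∈ T} (Fin.cons T τ : Fin (n + 1) → Finset (Fin d))) (x j) := by
        intro τ
        simp only [← Finset.prod_mul_distrib]
        rw [hrefl.sum_prod hstep fun j s =>
          α j ^ s * halfLineCount (α j) (visits {T | j ∈ T} τ) (x j + s)]
        refine Finset.sum_congr rfl fun T _ => ?_
        congr 1
        refine Finset.prod_congr rfl fun j _ => ?_
        rw [visits_cons]
        by_cases hj : j ∈ T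
        · simp only [hj, if_true, Set.mem_ofPred_eq]
          rw [add_comm 1, halfLineCount_succ_of_nonneg _ _ (hx j)]
          simp [sub_eq_add_neg]
        · simp [hj]
      simp only [ih, ← iidMean_const_mul]
      rw [← iidMean_sum, ← iidMean_sum]
      simp only [key]
    · push Not at hx
      obtain ⟨j, hj⟩ := hx
      refine (Finset.sum_eq_zero fun T _ => ?_).symm
      rw [iidMean, Finset.sum_eq_zero fun τ _ => ?_, mul_zero]
      exact mul_eq_zero_of_right _
        (Finset.prod_eq_zero (Finset.mem_univ j) (halfLineCount_of_neg _ _ hj))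

end Patterns

/-! ### Probabilistic form of the weighted count and its asymptotics -/

section Asymptotics

variable {d : ℕ} {S : Finset (Fin d → ℤ)} {α : Fin d → ℝ}

/-- The probability of the support pattern `T` under the law that picks a step `σ` with
probability proportional to `α ^ σ`. -/
noncomputable def patternProb (S : Finset (Fin d → ℤ)) (α : Fin d → ℝ) (T : Finset (Fin d)) : ℝ :=
  patternWeight S T * (∏ j, if j ∈ T then α j + (α j)⁻¹ else 1) / inventory d S α

lemma inventory_eq (hstep : IsStepset d S) (hrefl : Reflectable d S) :
    inventory d S α
      = ∑ T, patternWeight S T * ∏ j, if j ∈ T then α j + (α j)⁻¹ else 1 := by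
  rw [inventory, hrefl.sum_prod hstep fun j s => α j ^ s]
  simp

lemma inventory_pos (hd : 1 ≤ d) (hnt : NontrivialStepset d S) (hα : ∀ j, 0 < α j) :
    0 < inventory d S α := by
  obtain ⟨σ, hσ, -⟩ := hnt ⟨0, hd⟩
  exact Finset.sum_pos (fun σ _ => Finset.prod_pos fun j _ => zpow_pos (hα j) _) ⟨σ, hσ⟩

/-- The weight of the steps that go up in direction `j`, up to the factor `α j`. -/
noncomputable def upWeight (S : Finset (Fin d → ℤ)) (α : Fin d → ℝ) (j : Fin d) : ℝ :=
  ∑ σ ∈ S.filter (fun σ => σ j = 1), ∏ k ∈ Finset.univ.erase j, α k ^ (σ k)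

lemma upWeight_pos (hstep : IsStepset d S) (hrefl : Reflectable d S) (hnt : NontrivialStepset d S)
    (hα : ∀ j, 0 < α j) (j : Fin d) : 0 < upWeight S α j := by
  refine Finset.sum_pos (fun σ _ => Finset.prod_pos fun j _ => zpow_pos (hα j) _) ?_
  obtain ⟨σ, hσ, hj⟩ := hnt j
  rcases hstep σ hσ j with h | h | h
  · exact ⟨_, Finset.mem_filter.2 ⟨hrefl σ hσ j, by simp [h]⟩⟩
  · exact absurd h hj
  · exact ⟨σ, Finset.mem_filter.2 ⟨hσ, h⟩⟩

/-- The probability that a step moves in direction `j`. -/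
lemma sum_patternProb_mem (hstep : IsStepset d S) (hrefl : Reflectable d S) (j : Fin d) :
    (∑ T, if T ∈ {T : Finset (Fin d) | j ∈ T} then patternProb S α T else 0)
      = (α j + (α j)⁻¹) * upWeight S α j / inventory d S α := by
  have hup : upWeight S α j = ∑ T, patternWeight S T *
      ∏ k, (if k ∈ T then (if k = j then 1 else α k + (α k)⁻¹) else if k = j then 0 else 1) := by
    have h := hrefl.sum_prod hstep fun k s => if k = j then (if s = 1 then (1 : ℝ) else 0) else α k ^ s
    rw [upWeight, Finset.sum_filter]
    refine Eq.trans (Finset.sum_congr rfl fun σ _ => ?_) (h.trans ?_)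
    · rw [← Finset.mul_prod_erase _ _ (Finset.mem_univ j)]
      rw [Finset.prod_congr rfl fun k hk => if_neg (Finset.ne_of_mem_erase hk)]
      simp
    · refine Finset.sum_congr rfl fun T _ => ?_
      congr 1
      refine Finset.prod_congr rfl fun k _ => ?_
      by_cases hk : k = j <;> simp [hk]
  rw [hup, Finset.mul_sum, Finset.sum_div]
  refine Finset.sum_congr rfl fun T _ => ?_
  simp only [Set.mem_ofPred_eq]
  rw [← Finset.mul_prod_erase _ _ (Finset.mem_univ j)]
  by_cases hj : j ∈ T
  · rw [if_pos hj, if_pos hj, if_pos rfl, patternProb,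
      ← Finset.mul_prod_erase _ _ (Finset.mem_univ j), if_pos hj]
    have : ∀ k ∈ Finset.univ.erase j,
        (if k ∈ T then (if k = j then 1 else α k + (α k)⁻¹) else if k = j then 0 else 1)
          = if k ∈ T then α k + (α k)⁻¹ else 1 := by
      intro k hk
      simp [Finset.ne_of_mem_erase hk]
    rw [Finset.prod_congr rfl this]
    ring
  · simp [hj]

/-- The normalized count is the mean of a product of one-dimensional survival probabilities. -/
lemma qcount_mul_zpow_eq (hstep : IsStepset d S) (hrefl : Reflectable d S) (hα : ∀ j, 0 < α j)
    (n : ℕ) :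
    qcount d S α n * inventory d S α ^ (-(n : ℤ))
      = iidMean (patternProb S α) n (fun τ => ∏ j, survival (α j) (visits {T | j ∈ T} τ)) := by
  rw [qcount_eq_orthantCount, orthantCount_eq_iidMean hstep hrefl hα, iidMean, iidMean,
    Finset.sum_mul]
  refine Finset.sum_congr rfl fun τ _ => ?_
  have hpow : ∏ i, ∏ j, (if j ∈ τ i then α j + (α j)⁻¹ else 1)
      = ∏ j, (α j + (α j)⁻¹) ^ visits {T | j ∈ T} τ := by
    rw [Finset.prod_comm]
    refine Finset.prod_congr rfl fun j _ => ?_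
    rw [visits, ← Finset.prod_pow_eq_pow_sum]
    refine Finset.prod_congr rfl fun i _ => ?_
    by_cases h : j ∈ τ i <;> simp [h]
  have hne : ∏ j, (α j + (α j)⁻¹) ^ visits {T | j ∈ T} τ ≠ 0 :=
    Finset.prod_ne_zero_iff.2 fun j _ => by have := hα j; positivity
  simp only [patternProb, survival, Finset.prod_div_distrib, Finset.prod_mul_distrib, hpow,
    Finset.prod_const, Finset.card_univ, Fintype.card_fin, zpow_neg, zpow_natCast, Pi.zero_apply]
  set K := ∏ j, (α j + (α j)⁻¹) ^ visits {T | j ∈ T} τ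
  field_simp

/-- Asymptotics of one factor in the regime `u → ∞`, `v / u → q`, where `u` is the length of the
walk in the orthant and `v` the number of its steps that move a given coordinate. -/
lemma tendsto_survival_mul_rpow {a q : ℝ} (ha : 1 ≤ a) (hq : 0 < q) {X : Type*} {F : Filter X}
    {u v : X → ℕ} (hu : Filter.Tendsto u F Filter.atTop)
    (hv : Filter.Tendsto (fun x => (v x : ℝ) / u x) F (nhds q)) :
    Filter.Tendsto (fun x => survival a (v x) * (u x : ℝ) ^ (if a = 1 then (1 / 2 : ℝ) else 0)) F
      (nhds (if a = 1 then Real.sqrt (2 / (π * q)) else 1 - a ^ (-2 : ℤ))) := by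
  have hu' : Filter.Tendsto (fun x => (u x : ℝ)) F Filter.atTop :=
    tendsto_natCast_atTop_atTop.comp hu
  have hupos : ∀ᶠ x in F, (0 : ℝ) < u x := hu'.eventually_gt_atTop 0
  have hvtop : Filter.Tendsto v F Filter.atTop := by
    rw [← tendsto_natCast_atTop_iff (R := ℝ)]
    refine (hv.pos_mul_atTop hq hu').congr' ?_
    filter_upwards [hupos] with x hx
    field_simp
  split_ifs with h1
  · subst h1
    have h := (tendsto_survival_one.comp hvtop).mul
      (hv.rpow_const (p := (-(1 / 2) : ℝ)) (Or.inl hq.ne'))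
    have e : Real.sqrt (2 / π) * q ^ (-(1 / 2) : ℝ) = Real.sqrt (2 / (π * q)) := by
      rw [Real.rpow_neg hq.le, ← Real.sqrt_eq_rpow, ← Real.sqrt_inv,
        ← Real.sqrt_mul (by positivity)]
      congr 1
      field_simp
    rw [e] at h
    refine h.congr' ?_
    filter_upwards [hupos, hvtop.eventually_gt_atTop 0] with x hx hx2
    have hx2' : (0 : ℝ) < v x := by exact_mod_cast hx2
    simp only [Function.comp]
    rw [Real.div_rpow hx2'.le hx.le, Real.rpow_neg hx2'.le, Real.rpow_neg hx.le]
    have := Real.rpow_pos_of_pos hx (1 / 2)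
    have := Real.rpow_pos_of_pos hx2' (1 / 2)
    field_simp
  · simp only [Real.rpow_zero, mul_one]
    exact (tendsto_survival_of_one_lt (lt_of_le_of_ne ha (Ne.symm h1))).comp hvtop

end Asymptotics

/-- Asymptotics with explicit constant in the case where all weights are `≥ 1`. -/
theorem asymptotics_weights_at_least_one
    (d : ℕ) (hd : 1 ≤ d) (S : Finset (Fin d → ℤ))
    (hstep : IsStepset d S) (hrefl : Reflectable d S) (hnt : NontrivialStepset d S)
    (α : Fin d → ℝ) (hα : ∀ j, 0 < α j) (hα1 : ∀ j, 1 ≤ α j)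
    (r : ℕ) (hr : r = (Finset.univ.filter (fun j : Fin d => α j = 1)).card)
    (P : Fin d → ℝ)
    (hP : ∀ j, P j = ∑ σ ∈ S.filter (fun σ => σ j = 1),
        ∏ k ∈ Finset.univ.erase j, α k ^ (σ k))
    (γ : ℝ)
    (hγ : γ = (∏ j ∈ Finset.univ.filter (fun j : Fin d => 1 < α j),
          (1 - (α j) ^ (-2 : ℤ))) *
        ∏ j ∈ Finset.univ.filter (fun j : Fin d => α j = 1),
          Real.sqrt (inventory d S α / (π * P j))) :
    0 < γ ∧
    Filter.Tendsto
      (fun n : ℕ => qcount d S α n * (inventory d S α) ^ (-(n : ℤ))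
          * (n : ℝ) ^ ((r : ℝ) / 2))
      Filter.atTop (nhds γ) := by
  have hP' : P = upWeight S α := funext hP
  subst hP'
  have hs := inventory_pos hd hnt hα
  have hPpos := upWeight_pos hstep hrefl hnt hα
  have hc : ∀ j, 0 < α j + (α j)⁻¹ := fun j => add_pos (hα j) (inv_pos.2 (hα j))
  set s := inventory d S α with hs_def
  refine ⟨?_, ?_⟩
  · rw [hγ]
    refine mul_pos (Finset.prod_pos fun j hj => ?_) (Finset.prod_pos fun j _ => ?_)
    · have h1 : 1 < α j := (Finset.mem_filter.1 hj).2
      have : (α j) ^ (-2 : ℤ) < 1 := zpow_lt_one_of_neg₀ h1 (by norm_num)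
      linarith
    · have := hPpos j
      positivity
  -- The coordinates with `α j = 1` share the factor `n ^ (r / 2)` equally.
  set e : Fin d → ℝ := fun j => if α j = 1 then 1 / 2 else 0 with he
  have hsplit : ∀ n : ℕ, (n : ℝ) ^ ((r : ℝ) / 2) = ∏ j, (n : ℝ) ^ e j := by
    intro n
    have h1 : ∀ j, (n : ℝ) ^ e j = if α j = 1 then (n : ℝ) ^ (1 / 2 : ℝ) else 1 := by
      intro j
      simp only [he]
      split_ifs <;> simp
    simp only [h1]
    rw [← Finset.prod_filter, Finset.prod_const, ← hr, ← Real.rpow_mul_natCast n.cast_nonneg]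
    ring_nf
  set p := patternProb S α with hp_def
  have hp : ∀ T, 0 ≤ p T := fun T =>
    div_nonneg (mul_nonneg (patternWeight_nonneg S T)
      (Finset.prod_nonneg fun j _ => by split_ifs; exacts [(hc j).le, zero_le_one])) hs.le
  have hp1 : ∑ T, p T = 1 := by
    simp only [hp_def, patternProb]
    rw [← Finset.sum_div, ← inventory_eq hstep hrefl, div_self hs.ne']
  set q : Fin d → ℝ := fun j => (α j + (α j)⁻¹) * upWeight S α j / s with hq_def
  have hq : ∀ j, 0 < q j := fun j => div_pos (mul_pos (hc j) (hPpos j)) hs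
  have hmain := tendsto_iidMean_visits hp hp1 (fun j => {T : Finset (Fin d) | j ∈ T}) q
    (fun j => by convert (sum_patternProb_mem hstep hrefl j).symm)
    (fun n N => (∏ j, survival (α j) (N j)) * (n : ℝ) ^ ((r : ℝ) / 2)) γ ((r : ℝ) / 2) ?_ ?_
  · refine hmain.congr fun n => ?_
    rw [qcount_mul_zpow_eq hstep hrefl hα, mul_comm, ← iidMean_const_mul]
    simp only [mul_comm]
    rfl
  · intro n N _
    rw [abs_of_nonneg (mul_nonneg (Finset.prod_nonneg fun j _ => survival_nonneg (hα j) _)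
      (Real.rpow_nonneg n.cast_nonneg _))]
    exact mul_le_of_le_one_left (Real.rpow_nonneg n.cast_nonneg _)
      (Finset.prod_le_one (fun j _ => survival_nonneg (hα j) _)
        fun j _ => survival_le_one (hα j) _)
  · simp only [hsplit, ← Finset.prod_mul_distrib]
    have hγ' : γ = ∏ j, if α j = 1 then Real.sqrt (2 / (π * q j)) else 1 - α j ^ (-2 : ℤ) := by
      rw [hγ, Finset.prod_ite, mul_comm]
      congr 1
      · refine Finset.prod_congr rfl fun j hj => ?_
        have h1 : α j = 1 := (Finset.mem_filter.1 hj).2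
        have := hPpos j
        simp only [hq_def, h1]
        congr 1
        field_simp
        norm_num
      · refine Finset.prod_congr ?_ fun _ _ => rfl
        ext j
        simp only [Finset.mem_filter, Finset.mem_univ, true_and]
        exact ⟨fun h => h.ne', fun h => lt_of_le_of_ne (hα1 j) (Ne.symm h)⟩
    rw [hγ']
    refine tendsto_finsetProd _ fun j _ => ?_
    refine tendsto_survival_mul_rpow (hα1 j) (hq j) ?_ ?_
    · exact Filter.tendsto_comap.mono_left inf_le_left
    · exact (tendsto_pi_nhds.1 (Filter.tendsto_comap (f := fun (x : ℕ × (Fin d → ℕ)) (j : Fin d) =>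
        (x.2 j : ℝ) / x.1)) j).mono_left inf_le_right
end
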